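/- Suppose (L, K) is a Mackey pair of Hopf subalgebras of H. Then for any finite-dimensional left K-module M and any finite-dimensional left L-module N there is a canonical isomorphism of H-modules M↑_K^H ⊗ N↑_L^H ≅ ⊕_{C ∈ L\H/K} (( (CK ⊗_K M)↓_{L ∩ {}^C K} ⊗ N↓_{L ∩ {}^C K} ))↑_{L ∩ {}^C K}^H, where on the left the tensor product of H-modules is taken via the comultiplication of H, {}^C M = CK ⊗_K M is restricted from {}^C K to L ∩ {}^C K, and N is restricted from L to L ∩ {}^C K. -/

import Mathlib

open TensorProduct

namespace MackeyPaper

noncomputable section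

universe v

variable (k : Type) [Field k] [CharZero k] [IsAlgClosed k]
variable (H : Type) [Ring H] [HopfAlgebra k H]

/-- A subcoalgebra of `H`: a `k`-subspace `C` with `Δ(C) ⊆ C ⊗ C`. -/
def IsSubcoalgebra (C : Submodule k H) : Prop :=
  ∀ c ∈ C, Coalgebra.comul (R := k) c ∈
    LinearMap.range (TensorProduct.map C.subtype C.subtype)

/-- A simple (nonzero, minimal) subcoalgebra of `H`. -/
def IsSimpleSubcoalgebra (C : Submodule k H) : Prop :=
  IsSubcoalgebra k H C ∧ C ≠ ⊥ ∧
    ∀ D : Submodule k H, D ≤ C → IsSubcoalgebra k H D → D ≠ ⊥ → D = C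

/-- A Hopf subalgebra of `H`: a subalgebra which is a subcoalgebra and is
stable under the antipode. -/
def IsHopfSubalgebra (K : Subalgebra k H) : Prop :=
  IsSubcoalgebra k H K.toSubmodule ∧ ∀ x ∈ K, HopfAlgebra.antipode (R := k) x ∈ K

/-- `Λ` is the (two-sided) idempotent integral of the Hopf subalgebra `K`,
i.e. the integral normalized by `ε(Λ) = 1`. -/
def IsIdempotentIntegral (K : Subalgebra k H) (Λ : H) : Prop :=
  Λ ∈ K ∧ Coalgebra.counit (R := k) Λ = 1 ∧
    ∀ x ∈ K, x * Λ = Coalgebra.counit (R := k) x • Λ ∧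
      Λ * x = Coalgebra.counit (R := k) x • Λ

/-- A cocommutative element of `H`; the cocommutative elements of `H` form
the character ring `C(H^*)`. -/
def IsCocomm (x : H) : Prop :=
  (TensorProduct.comm k H H) (Coalgebra.comul (R := k) x) = Coalgebra.comul (R := k) x

/-- The character ring `C(H^*)`, i.e. the space of cocommutative elements of `H`,
as a `k`-subspace of `H`. -/
def charRing : Submodule k H :=
  LinearMap.ker ((TensorProduct.comm k H H).toLinearMap ∘ₗ Coalgebra.comul (R := k)
      - Coalgebra.comul (R := k))

/-- `d` is the irreducible character (of `H^*`) associated to the simple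
subcoalgebra `C`: the unique cocommutative element of `C` whose counit is the
positive square root of `dim_k C`. -/
def IsCharacterOf (d : H) (C : Submodule k H) : Prop :=
  d ∈ C ∧ IsCocomm k H d ∧
    Coalgebra.counit (R := k) d = ((Nat.sqrt (Module.finrank k ↥C) : ℕ) : k)

/-- The right coset `CK` of a subcoalgebra `C`, i.e. the subspace `C·K`. -/
def CKsub (K : Subalgebra k H) (C : Submodule k H) : Submodule k H :=
  C * K.toSubmodule

/-- The conjugate Hopf subalgebra `ᶜK` of `K` by a simple subcoalgebra `C`
(with associated irreducible character `c`): the span of all simple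
subcoalgebras of `H` whose irreducible character `d` satisfies
`d·c·Λ_K = ε(d)·c·Λ_K`.  (The condition is stated for all cocommutative
elements of `C` resp. `D`; this is equivalent, since the cocommutative
elements of a simple subcoalgebra are exactly the scalar multiples of its
irreducible character.) -/
def conjK (K : Subalgebra k H) (Λ : H) (C : Submodule k H) : Submodule k H :=
  sSup {D : Submodule k H | IsSimpleSubcoalgebra k H D ∧
    ∀ d ∈ D, IsCocomm k H d → ∀ c ∈ C, IsCocomm k H c →
      d * (c * Λ) = Coalgebra.counit (R := k) d • (c * Λ)}

/-- A complete irredundant system of representatives (by simple subcoalgebras)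
of the double cosets `L\H/K`.  (Taking `L = ⊥` gives a system of
representatives of the right cosets `H/K`.) -/
def IsDoubleCosetReps (L K : Subalgebra k H) {ι : Type} (rep : ι → Submodule k H) : Prop :=
  (∀ i, IsSimpleSubcoalgebra k H (rep i)) ∧
  (∀ i j, L.toSubmodule * rep i * K.toSubmodule = L.toSubmodule * rep j * K.toSubmodule
      → i = j) ∧
  (∀ C : Submodule k H, IsSimpleSubcoalgebra k H C →
      ∃ i, C ≤ L.toSubmodule * rep i * K.toSubmodule)

section Ind

variable (K : Subalgebra k H) (M : Type v) [AddCommGroup M] [Module k M]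
  [Module ↥K M] [IsScalarTower k ↥K M]

/-- The relations defining the induced module `H ⊗_K M` as a quotient of
`H ⊗_k M`: the `H`-submodule generated by the elements `a ⊗ m - 1 ⊗ a·m`
for `a ∈ K` (equivalently, spanned by all `h·a ⊗ m - h ⊗ a·m`). -/
def indRel : Submodule H (H ⊗[k] M) :=
  Submodule.span H {z | ∃ (a : ↥K) (m : M),
    z = (a : H) ⊗ₜ[k] m - (1 : H) ⊗ₜ[k] (a • m)}

/-- The induced module `M↑_K^H = H ⊗_K M`, a left `H`-module. -/
abbrev Ind := (H ⊗[k] M) ⧸ indRel k H K M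

variable (C : Submodule k H)

/-- The underlying space `CK ⊗_k M` of which the conjugate module `ᶜM` is a
quotient. -/
def CKM : Type _ := ↥(CKsub k H K C) ⊗[k] M

instance : AddCommGroup (CKM k H K M C) :=
  inferInstanceAs (AddCommGroup (↥(CKsub k H K C) ⊗[k] M))

instance : Module k (CKM k H K M C) :=
  inferInstanceAs (Module k (↥(CKsub k H K C) ⊗[k] M))

/-- The pure tensor `x ⊗ m` as an element of `CK ⊗_k M`. -/
def ckmk (x : ↥(CKsub k H K C)) (m : M) : CKM k H K M C := x ⊗ₜ[k] m

/-- The relations defining the conjugate module `ᶜM = CK ⊗_K M` as a quotient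
of `CK ⊗_k M`: `x·a ⊗ m - x ⊗ a·m` for `a ∈ K`. -/
def conjRel : Submodule k (CKM k H K M C) :=
  Submodule.span k {z | ∃ (x : ↥(CKsub k H K C)) (a : ↥K) (m : M)
    (hxa : (x : H) * (a : H) ∈ CKsub k H K C),
    z = ckmk k H K M C ⟨(x : H) * (a : H), hxa⟩ m - ckmk k H K M C x (a • m)}

/-- The conjugate module `ᶜM := CK ⊗_K M`. -/
abbrev ConjM := CKM k H K M C ⧸ conjRel k H K M C

/-- The canonical copy of the conjugate module `ᶜM = CK ⊗_K M` inside
`H ⊗_K M` (the image of `CK ⊗_K M` under multiplication; this is indeed a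
copy of `ᶜM` since `H` is a free right `K`-module and `CK` is one of the
coset summands). -/
def conjMsub : Submodule k (Ind k H K M) :=
  Submodule.span k {z | ∃ (x : H) (_ : x ∈ CKsub k H K C) (m : M),
    z = Submodule.Quotient.mk (x ⊗ₜ[k] m)}

end Ind

section Comp

variable (L K : Subalgebra k H) (Λ : H) (C : Submodule k H)
variable (M : Type v) [AddCommGroup M] [Module k M] [Module ↥K M] [IsScalarTower k ↥K M]

/-- The underlying space `L ⊗_k (CK ⊗_k M)`. -/
def LCM : Type _ := ↥L ⊗[k] CKM k H K M C

instance : AddCommGroup (LCM k H L K C M) :=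
  inferInstanceAs (AddCommGroup (↥L ⊗[k] CKM k H K M C))

instance : Module k (LCM k H L K C M) :=
  inferInstanceAs (Module k (↥L ⊗[k] CKM k H K M C))

/-- The pure tensor `l ⊗ w` as an element of `L ⊗_k (CK ⊗_k M)`. -/
def lcmk (l : ↥L) (w : CKM k H K M C) : LCM k H L K C M := l ⊗ₜ[k] w

/-- The relations defining `L ⊗_{L ∩ ᶜK} ᶜM` as a quotient of
`L ⊗_k (CK ⊗_k M)`: the balancedness relations over `L ∩ ᶜK` (first set),
together with (the image of) the relations defining `ᶜM = CK ⊗_K M`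
(second set). -/
def compRel : Submodule k (LCM k H L K C M) :=
  Submodule.span k
    ({z | ∃ (l : ↥L) (a : H) (haL : a ∈ L) (_ : a ∈ conjK k H K Λ C)
        (x : ↥(CKsub k H K C)) (m : M) (hax : a * (x : H) ∈ CKsub k H K C),
        z = lcmk k H L K C M ⟨(l : H) * a, mul_mem l.2 haL⟩ (ckmk k H K M C x m)
          - lcmk k H L K C M l (ckmk k H K M C ⟨a * (x : H), hax⟩ m)} ∪
     {z | ∃ (l : ↥L) (x : ↥(CKsub k H K C)) (a : ↥K) (m : M)
        (hxa : (x : H) * (a : H) ∈ CKsub k H K C),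
        z = lcmk k H L K C M l (ckmk k H K M C ⟨(x : H) * (a : H), hxa⟩ m)
          - lcmk k H L K C M l (ckmk k H K M C x (a • m))})

/-- The module `L ⊗_{L ∩ ᶜK} ᶜM` (a left `L`-module via multiplication on the
first tensor factor). -/
abbrev Comp := LCM k H L K C M ⧸ compRel k H L K Λ C M

end Comp

open DirectSum

section Mackey

variable (L K : Subalgebra k H) (Λ : H)

/-- The Mackey isomorphism property for the pair `(L, K)` at the `K`-module
`M`: for any system of double coset representatives, the left-multiplication
map `⊕_C L ⊗_{L ∩ ᶜK} ᶜM → M↑_K^H↓_L^H`, `l ⊗ v ↦ l·v`, is an isomorphism of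
`L`-modules.  (A `k`-linear map satisfying the displayed formula on the
spanning elements is automatically `L`-equivariant for the evident
`L`-actions, so this property is stated for `k`-linear maps.) -/
def MackeyAt (M : Type v) [AddCommGroup M] [Module k M] [Module ↥K M]
    [IsScalarTower k ↥K M] [Module.Finite k M] : Prop :=
  ∀ (ι : Type) [DecidableEq ι] (rep : ι → Submodule k H),
    IsDoubleCosetReps k H L K rep →
    ∃ π : (⨁ i : ι, Comp k H L K Λ (rep i) M) →ₗ[k] Ind k H K M,
      Function.Bijective π ∧
      ∀ (i : ι) (l : ↥L) (x : ↥(CKsub k H K (rep i))) (m : M),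
        π (DirectSum.of (fun i => Comp k H L K Λ (rep i) M) i
            (Submodule.Quotient.mk (lcmk k H L K (rep i) M l (ckmk k H K M (rep i) x m)))) =
          Submodule.Quotient.mk (((l : H) * (x : H)) ⊗ₜ[k] m)

/-- `(L, K)` is a Mackey pair of Hopf subalgebras of `H` (here `Λ` is the
idempotent integral of `K`): for every finite-dimensional `K`-module `M` the
left-multiplication homomorphism `π_M` is an isomorphism. -/
def IsMackeyPair : Prop :=
  ∀ (M : Type v) [AddCommGroup M] [Module k M] [Module ↥K M]
    [IsScalarTower k ↥K M] [Module.Finite k M], MackeyAt k H L K Λ M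

end Mackey


section Statements

/-- The underlying space `(CK ⊗_k M) ⊗_k N`. -/
def CKMN (L K : Subalgebra k H) (C : Submodule k H)
    (M : Type v) [AddCommGroup M] [Module k M]
    (N : Type v) [AddCommGroup N] [Module k N] [Module ↥L N] : Type v :=
  CKM k H K M C ⊗[k] N

instance (L K : Subalgebra k H) (C : Submodule k H)
    (M : Type v) [AddCommGroup M] [Module k M]
    (N : Type v) [AddCommGroup N] [Module k N] [Module ↥L N] :
    AddCommGroup (CKMN k H L K C M N) :=
  inferInstanceAs (AddCommGroup (CKM k H K M C ⊗[k] N))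

instance (L K : Subalgebra k H) (C : Submodule k H)
    (M : Type v) [AddCommGroup M] [Module k M]
    (N : Type v) [AddCommGroup N] [Module k N] [Module ↥L N] :
    Module k (CKMN k H L K C M N) :=
  inferInstanceAs (Module k (CKM k H K M C ⊗[k] N))

/-- The pure tensor `w ⊗ n ∈ (CK ⊗_k M) ⊗_k N`. -/
def ckmnk (L K : Subalgebra k H) (C : Submodule k H)
    (M : Type v) [AddCommGroup M] [Module k M]
    (N : Type v) [AddCommGroup N] [Module k N] [Module ↥L N]
    (w : CKM k H K M C) (n : N) : CKMN k H L K C M N :=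
  w ⊗ₜ[k] n

/-- The relations defining `((ᶜM)↓_{L∩ᶜK} ⊗ N↓_{L∩ᶜK})↑_{L∩ᶜK}^H` as a
quotient of `H ⊗_k ((CK ⊗_k M) ⊗_k N)`: the relations defining
`ᶜM = CK ⊗_K M` (first set), and the balancedness relations over `B = L∩ᶜK`
for the diagonal `B`-action on `ᶜM ⊗ N` through the comultiplication
(second set; `b₁` acts on `ᶜM` by left multiplication, and `b₂ ∈ L` acts on
`N` through the `L`-module structure of `N`). -/
def tpRel (L K : Subalgebra k H) (Λ : H) (C : Submodule k H)
    (M : Type v) [AddCommGroup M] [Module k M] [Module ↥K M] [IsScalarTower k ↥K M]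
    (N : Type v) [AddCommGroup N] [Module k N] [Module ↥L N] [IsScalarTower k ↥L N] :
    Submodule H (H ⊗[k] CKMN k H L K C M N) :=
  Submodule.span H
    ({z | ∃ (x : ↥(CKsub k H K C)) (a : ↥K) (m : M) (n : N)
        (hxa : (x : H) * (a : H) ∈ CKsub k H K C),
        z = (1 : H) ⊗ₜ[k]
              ckmnk k H L K C M N (ckmk k H K M C ⟨(x : H) * (a : H), hxa⟩ m) n
          - (1 : H) ⊗ₜ[k]
              ckmnk k H L K C M N (ckmk k H K M C x (a • m)) n} ∪
     {z | ∃ (b : H) (hbL : b ∈ L) (_ : b ∈ conjK k H K Λ C)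
        (x : ↥(CKsub k H K C)) (m : M) (n : N) (r : ℕ) (b₁ b₂ : Fin r → H)
        (hb₁ : ∀ j, b₁ j * (x : H) ∈ CKsub k H K C) (hb₂ : ∀ j, b₂ j ∈ L),
        Coalgebra.comul (R := k) b = ∑ j, b₁ j ⊗ₜ[k] b₂ j ∧
        z = b ⊗ₜ[k] ckmnk k H L K C M N (ckmk k H K M C x m) n
          - ∑ j, (1 : H) ⊗ₜ[k]
              ckmnk k H L K C M N (ckmk k H K M C ⟨b₁ j * (x : H), hb₁ j⟩ m)
                ((⟨b₂ j, hb₂ j⟩ : ↥L) • n)})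

/-- The `H`-module `((ᶜM)↓_{L∩ᶜK} ⊗ N↓_{L∩ᶜK})↑_{L∩ᶜK}^H`. -/
abbrev TPInd (L K : Subalgebra k H) (Λ : H) (C : Submodule k H)
    (M : Type v) [AddCommGroup M] [Module k M] [Module ↥K M] [IsScalarTower k ↥K M]
    (N : Type v) [AddCommGroup N] [Module k N] [Module ↥L N] [IsScalarTower k ↥L N] :=
  (H ⊗[k] CKMN k H L K C M N) ⧸ tpRel k H L K Λ C M N

end Statements

end

end MackeyPaper

/-!
Let `U = M↑^H`. The `H`-equivariant tensor identity `U ⊗ N↑_L^H ≅ (U↓_L ⊗ N)↑_L^H`, which uses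
the inverse of the antipode, reduces the claim to the Mackey decomposition `U ≅ ⨁ (ᶜM)↑^L` of
`U↓_L` and to the same identity for each summand `ᶜM`. Explicitly, the isomorphism sends
`h((x ⊗ m) ⊗ n)` to `h((x ⊗ m) ⊗ (1 ⊗ n))`, and its inverse is the equivariant extension of the
pairing `(l(x ⊗ m), n) ↦ ∑ l₁((x ⊗ m) ⊗ S(l₂)n)` of `U` with `N`.

For this pairing to be well defined over `L ∩ ᶜK` one needs `CK` to be stable under `ᶜK`. By the
argument of Larson and Radford, a semisimple `H` is cosemisimple: the value at `1` of an integral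
of the dual is a multiple of `Tr(S²)`, which is a sum of squared moduli because `S²` has finite
order by Radford's formula for `S⁴`. The form `(T, U) ↦ Tr(S²TU)` on the algebra of functionals on
`H` that are invariant under `K` is then nondegenerate and vanishes on the Jacobson radical, so this
algebra is semisimple. Now `CK` is the common kernel of those of its elements that vanish on `C`,
and these form a left ideal generated by an idempotent `f`. The identity `dcΛ = ε(d)cΛ` between
characters shows that the trace of `f` on `D ⊗ C` is zero, so that `f` vanishes on `DC`.
-/

open DirectSum

namespace MackeyPaper

noncomputable section

/-! ### Contracting tensors against functionals -/

section Contraction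

variable {k V W V' W' : Type*} [CommSemiring k]
  [AddCommMonoid V] [Module k V] [AddCommMonoid W] [Module k W]
  [AddCommMonoid V'] [Module k V'] [AddCommMonoid W'] [Module k W']

/-- The contraction `v ⊗ w ↦ p(v) w` of the first tensor factor against a functional. -/
def contractLeft (p : V →ₗ[k] k) : V ⊗[k] W →ₗ[k] W :=
  (TensorProduct.lid k W).toLinearMap ∘ₗ p.rTensor W

/-- The contraction `v ⊗ w ↦ q(w) v` of the second tensor factor against a functional. -/
def contractRight (q : W →ₗ[k] k) : V ⊗[k] W →ₗ[k] V :=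
  (TensorProduct.rid k V).toLinearMap ∘ₗ q.lTensor V

@[simp] lemma contractLeft_tmul (p : V →ₗ[k] k) (v : V) (w : W) :
    contractLeft p (v ⊗ₜ[k] w) = p v • w := by simp [contractLeft]

@[simp] lemma contractRight_tmul (q : W →ₗ[k] k) (v : V) (w : W) :
    contractRight q (v ⊗ₜ[k] w) = q w • v := by simp [contractRight]

lemma contractLeft_map (p : V' →ₗ[k] k) (f : V →ₗ[k] V') (g : W →ₗ[k] W') (t : V ⊗[k] W) :
    contractLeft p (TensorProduct.map f g t) = g (contractLeft (p ∘ₗ f) t) := by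
  induction t with
  | zero => simp
  | tmul x y => simp
  | add x y hx hy => simp [hx, hy]

lemma contractRight_map (q : W' →ₗ[k] k) (f : V →ₗ[k] V') (g : W →ₗ[k] W') (t : V ⊗[k] W) :
    contractRight q (TensorProduct.map f g t) = f (contractRight (q ∘ₗ g) t) := by
  induction t with
  | zero => simp
  | tmul x y => simp
  | add x y hx hy => simp [hx, hy]

lemma apply_contractRight (p : V →ₗ[k] k) (q : W →ₗ[k] k) (t : V ⊗[k] W) :
    p (contractRight q t) = q (contractLeft p t) := by
  induction t with
  | zero => simp
  | tmul x y => simp [mul_comm]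
  | add x y hx hy => simp [hx, hy]

/-- `contractLeft p t` as a linear map in the functional `p`. -/
def contractLeftHom (t : V ⊗[k] W) : (V →ₗ[k] k) →ₗ[k] W where
  toFun p := contractLeft p t
  map_add' p q := by simp [contractLeft, LinearMap.rTensor_add]
  map_smul' c p := by simp [contractLeft, LinearMap.rTensor_smul]

/-- `contractRight q t` as a linear map in the functional `q`. -/
def contractRightHom (t : V ⊗[k] W) : (W →ₗ[k] k) →ₗ[k] V where
  toFun q := contractRight q t
  map_add' p q := by simp [contractRight, LinearMap.lTensor_add]
  map_smul' c p := by simp [contractRight, LinearMap.lTensor_smul]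

lemma contractLeft_mem {P : Submodule k V} {Q : Submodule k W} {t : V ⊗[k] W}
    (ht : t ∈ LinearMap.range (TensorProduct.map P.subtype Q.subtype)) (p : V →ₗ[k] k) :
    contractLeft p t ∈ Q := by
  obtain ⟨s, rfl⟩ := ht
  rw [contractLeft_map]
  exact Subtype.property _

lemma contractRight_mem {P : Submodule k V} {Q : Submodule k W} {t : V ⊗[k] W}
    (ht : t ∈ LinearMap.range (TensorProduct.map P.subtype Q.subtype)) (q : W →ₗ[k] k) :
    contractRight q t ∈ P := by
  obtain ⟨s, rfl⟩ := ht
  rw [contractRight_map]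
  exact Subtype.property _

lemma exists_fin_sum_tmul (t : V ⊗[k] W) :
    ∃ (r : ℕ) (a : Fin r → V) (b : Fin r → W), t = ∑ j, a j ⊗ₜ[k] b j := by
  induction t with
  | zero => exact ⟨0, Fin.elim0, Fin.elim0, by simp⟩
  | tmul x y => exact ⟨1, fun _ => x, fun _ => y, by simp⟩
  | add x y hx hy =>
    obtain ⟨r, a, b, rfl⟩ := hx
    obtain ⟨s, c, d, rfl⟩ := hy
    exact ⟨r + s, Fin.append a c, Fin.append b d, by simp [Fin.sum_univ_add]⟩

lemma exists_fin_sum_tmul_of_mem {P : Submodule k V} {Q : Submodule k W} {t : V ⊗[k] W}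
    (ht : t ∈ LinearMap.range (TensorProduct.map P.subtype Q.subtype)) :
    ∃ (r : ℕ) (a : Fin r → V) (b : Fin r → W),
      (∀ j, a j ∈ P) ∧ (∀ j, b j ∈ Q) ∧ t = ∑ j, a j ⊗ₜ[k] b j := by
  obtain ⟨s, rfl⟩ := ht
  obtain ⟨r, a, b, rfl⟩ := exists_fin_sum_tmul s
  exact ⟨r, fun j => a j, fun j => b j, fun j => (a j).2, fun j => (b j).2, by simp⟩

end Contraction

section ContractionField

variable {k V W : Type*} [Field k] [AddCommGroup V] [Module k V] [AddCommGroup W] [Module k W]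

lemma eq_of_forall_contractLeft_eq {t t' : V ⊗[k] W}
    (h : ∀ p : V →ₗ[k] k, contractLeft p t = contractLeft p t') : t = t' := by
  classical
  apply (TensorProduct.equivFinsuppOfBasisLeft (N := W) (Module.Basis.ofVectorSpace k V)).injective
  ext i
  simpa [TensorProduct.equivFinsuppOfBasisLeft_apply, contractLeft] using
    h ((Module.Basis.ofVectorSpace k V).coord i)

lemma eq_of_forall_contractRight_eq {t t' : V ⊗[k] W}
    (h : ∀ p : W →ₗ[k] k, contractRight p t = contractRight p t') : t = t' := by
  classical
  apply (TensorProduct.equivFinsuppOfBasisRight (M := V) (Module.Basis.ofVectorSpace k W)).injective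
  ext i
  simpa [TensorProduct.equivFinsuppOfBasisRight_apply, contractRight] using
    h ((Module.Basis.ofVectorSpace k W).coord i)

lemma mem_range_map_subtype {P : Submodule k V} {Q : Submodule k W} {t : V ⊗[k] W}
    (hP : ∀ q : W →ₗ[k] k, contractRight q t ∈ P) (hQ : ∀ p : V →ₗ[k] k, contractLeft p t ∈ Q) :
    t ∈ LinearMap.range (TensorProduct.map P.subtype Q.subtype) := by
  obtain ⟨e, he⟩ := P.subtype.exists_leftInverse_of_injective (by simp)
  obtain ⟨f, hf⟩ := Q.subtype.exists_leftInverse_of_injective (by simp)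
  have e_apply (x : V) (hx : x ∈ P) : ((e x : P) : V) = x :=
    congrArg Subtype.val (LinearMap.congr_fun he ⟨x, hx⟩)
  have f_apply (x : W) (hx : x ∈ Q) : ((f x : Q) : W) = x :=
    congrArg Subtype.val (LinearMap.congr_fun hf ⟨x, hx⟩)
  have map_left : TensorProduct.map (P.subtype ∘ₗ e) LinearMap.id t = t := by
    refine eq_of_forall_contractRight_eq fun q => ?_
    rw [contractRight_map]
    exact e_apply _ (hP _)
  have map_right : TensorProduct.map LinearMap.id (Q.subtype ∘ₗ f) t = t := by
    refine eq_of_forall_contractLeft_eq fun q => ?_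
    rw [contractLeft_map]
    exact f_apply _ (hQ _)
  refine ⟨TensorProduct.map e f t, ?_⟩
  calc _ = TensorProduct.map (P.subtype ∘ₗ e) LinearMap.id
        (TensorProduct.map LinearMap.id (Q.subtype ∘ₗ f) t) := by
        rw [TensorProduct.map_map, TensorProduct.map_map]; rfl
    _ = t := by rw [map_right, map_left]

end ContractionField

section ContractionMul

variable {k A B : Type*} [CommSemiring k] [Semiring A] [Algebra k A] [Semiring B] [Algebra k B]

lemma contractLeft_tmul_mul (f : A →ₗ[k] k) (u : A) (v : B) (t : A ⊗[k] B) :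
    contractLeft f ((u ⊗ₜ v) * t) = v * contractLeft (f ∘ₗ LinearMap.mulLeft k u) t := by
  induction t with
  | zero => simp
  | tmul x y => simp
  | add x y hx hy => simp only [mul_add, map_add, hx, hy]

lemma contractLeft_mul_tmul (f : A →ₗ[k] k) (u : A) (v : B) (t : A ⊗[k] B) :
    contractLeft f (t * (u ⊗ₜ v)) = contractLeft (f ∘ₗ LinearMap.mulRight k u) t * v := by
  induction t with
  | zero => simp
  | tmul x y => simp
  | add x y hx hy => simp only [add_mul, map_add, hx, hy]

lemma contractRight_tmul_mul (f : B →ₗ[k] k) (u : A) (v : B) (t : A ⊗[k] B) :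
    contractRight f ((u ⊗ₜ v) * t) = u * contractRight (f ∘ₗ LinearMap.mulLeft k v) t := by
  induction t with
  | zero => simp
  | tmul x y => simp
  | add x y hx hy => simp only [mul_add, map_add, hx, hy]

lemma contractRight_mul_tmul (f : B →ₗ[k] k) (u : A) (v : B) (t : A ⊗[k] B) :
    contractRight f (t * (u ⊗ₜ v)) = contractRight (f ∘ₗ LinearMap.mulRight k v) t * u := by
  induction t with
  | zero => simp
  | tmul x y => simp
  | add x y hx hy => simp only [add_mul, map_add, hx, hy]

end ContractionMul

/-! ### Identities in a Hopf algebra -/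

section Hopf

open Coalgebra HopfAlgebra

variable {k H : Type*} [CommSemiring k] [Semiring H] [HopfAlgebra k H]

local notation "Δ" => Coalgebra.comul (R := k) (A := H)
local notation "ε" => Coalgebra.counit (R := k) (A := H)
local notation "𝖲" => HopfAlgebra.antipode k (A := H)

section Sums

variable {r : ℕ} {x : H} {a b : Fin r → H}

lemma sum_antipode_mul (h : Δ x = ∑ j, a j ⊗ₜ[k] b j) : ∑ j, 𝖲 (a j) * b j = ε x • 1 :=
  sum_antipode_mul_eq_smul ⟨Finset.univ, a, b, h.symm⟩

lemma sum_mul_antipode (h : Δ x = ∑ j, a j ⊗ₜ[k] b j) : ∑ j, a j * 𝖲 (b j) = ε x • 1 :=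
  sum_mul_antipode_eq_smul ⟨Finset.univ, a, b, h.symm⟩

lemma sum_counit_smul_right (h : Δ x = ∑ j, a j ⊗ₜ[k] b j) : ∑ j, ε (a j) • b j = x :=
  sum_counit_smul ⟨Finset.univ, a, b, h.symm⟩

lemma sum_counit_smul_left (h : Δ x = ∑ j, a j ⊗ₜ[k] b j) : ∑ j, ε (b j) • a j = x := by
  simpa using congrArg (TensorProduct.rid k H)
    (sum_tmul_counit_eq (R := k) ⟨Finset.univ, a, b, h.symm⟩)

lemma sum_coassoc {Z : Type*} [AddCommMonoid Z] [Module k Z] (h : Δ x = ∑ j, a j ⊗ₜ[k] b j)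
    (G : H ⊗[k] (H ⊗[k] H) →ₗ[k] Z) :
    ∑ j, G (a j ⊗ₜ Δ (b j)) = ∑ j, G (TensorProduct.assoc k H H H (Δ (a j) ⊗ₜ b j)) := by
  have := congrArg G (coassoc_apply (R := k) x)
  rw [h] at this
  simpa using this.symm

lemma sum_antipode_tmul_mul_comul (h : Δ x = ∑ j, a j ⊗ₜ[k] b j) :
    ∑ j, (𝖲 (a j) ⊗ₜ[k] (1 : H)) * Δ (b j) = 1 ⊗ₜ x := by
  let G : H ⊗[k] (H ⊗[k] H) →ₗ[k] H ⊗[k] H :=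
    LinearMap.mul' k (H ⊗[k] H) ∘ₗ TensorProduct.map
      ((Algebra.TensorProduct.includeLeft (R := k) (S := k) (A := H) (B := H)).toLinearMap ∘ₗ 𝖲)
      LinearMap.id
  have G_assoc (t : H ⊗[k] H) (c : H) : G (TensorProduct.assoc k H H H (t ⊗ₜ c)) =
      (LinearMap.mul' k H ((𝖲).rTensor H t)) ⊗ₜ c := by
    induction t with
    | zero => simp
    | tmul u v => simp [G]
    | add u v hu hv => simp only [add_tmul, map_add, hu, hv]
  calc _ = ∑ j, G (a j ⊗ₜ Δ (b j)) := by simp [G]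
    _ = ∑ j, (1 : H) ⊗ₜ (ε (a j) • b j) := by
      simp only [sum_coassoc h, G_assoc, mul_antipode_rTensor_comul_apply,
        Algebra.algebraMap_eq_smul_one, smul_tmul]
    _ = 1 ⊗ₜ x := by rw [← tmul_sum, sum_counit_smul_right h]

lemma sum_comul_mul_tmul_antipode (h : Δ x = ∑ j, a j ⊗ₜ[k] b j) :
    ∑ j, Δ (a j) * ((1 : H) ⊗ₜ[k] 𝖲 (b j)) = x ⊗ₜ 1 := by
  let G : H ⊗[k] (H ⊗[k] H) →ₗ[k] H ⊗[k] H :=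
    (LinearMap.mul' k (H ⊗[k] H) ∘ₗ TensorProduct.map LinearMap.id
      ((Algebra.TensorProduct.includeRight (R := k) (A := H) (B := H)).toLinearMap ∘ₗ 𝖲))
      ∘ₗ (TensorProduct.assoc k H H H).symm.toLinearMap
  have G_tmul (t : H ⊗[k] H) (c : H) : G (c ⊗ₜ t) =
      c ⊗ₜ (LinearMap.mul' k H ((𝖲).lTensor H t)) := by
    induction t with
    | zero => simp
    | tmul u v => simp [G]
    | add u v hu hv => simp only [tmul_add, map_add, hu, hv]
  calc _ = ∑ j, G (TensorProduct.assoc k H H H (Δ (a j) ⊗ₜ b j)) := by simp [G]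
    _ = ∑ j, (ε (b j) • a j) ⊗ₜ (1 : H) := by
      simp only [← sum_coassoc h, G_tmul, mul_antipode_lTensor_comul_apply,
        Algebra.algebraMap_eq_smul_one, tmul_smul, smul_tmul']
    _ = x ⊗ₜ 1 := by rw [← sum_tmul, sum_counit_smul_left h]

lemma one_tmul_mul_comul (h : Δ x = ∑ j, a j ⊗ₜ[k] b j) (z : H) :
    (1 ⊗ₜ x) * Δ z = ∑ j, (𝖲 (a j) ⊗ₜ[k] (1 : H)) * Δ (b j * z) := by
  rw [← sum_antipode_tmul_mul_comul h, Finset.sum_mul]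
  simp only [Bialgebra.comul_mul, mul_assoc]

lemma comul_mul_tmul_one (h : Δ x = ∑ j, a j ⊗ₜ[k] b j) (z : H) :
    Δ z * (x ⊗ₜ 1) = ∑ j, Δ (z * a j) * ((1 : H) ⊗ₜ[k] 𝖲 (b j)) := by
  rw [← sum_comul_mul_tmul_antipode h, Finset.mul_sum]
  simp only [Bialgebra.comul_mul, mul_assoc]

end Sums

-- Both sides are convolution inverses of `Δ` in `Hom(H, H ⊗ H)`.
lemma comul_antipode (x : H) :
    Δ (𝖲 x) = TensorProduct.map 𝖲 𝖲 (TensorProduct.comm k H H (Δ x)) := by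
  let F : H →ₗ[k] H ⊗[k] H :=
    TensorProduct.map 𝖲 𝖲 ∘ₗ (TensorProduct.comm k H H).toLinearMap ∘ₗ Δ
  suffices WithConv.toConv F * WithConv.toConv Δ = 1 from
    (LinearMap.congr_fun (congrArg WithConv.ofConv
      (left_inv_eq_right_inv this LinearMap.comul_right_inv)) x).symm
  let G : H ⊗[k] (H ⊗[k] H) →ₗ[k] H ⊗[k] H :=
    LinearMap.mul' k (H ⊗[k] H) ∘ₗ TensorProduct.map
      ((Algebra.TensorProduct.includeRight (R := k) (A := H) (B := H)).toLinearMap ∘ₗ 𝖲)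
      (LinearMap.mul' k (H ⊗[k] H) ∘ₗ TensorProduct.map
        ((Algebra.TensorProduct.includeLeft (R := k) (S := k) (A := H) (B := H)).toLinearMap ∘ₗ 𝖲)
        Δ)
  have G_comul (c y : H) : G (c ⊗ₜ Δ y) = 1 ⊗ₜ (𝖲 c * y) := by
    obtain ⟨r, u, v, hy⟩ := exists_fin_sum_tmul (Δ y)
    calc G (c ⊗ₜ Δ y) = (1 ⊗ₜ 𝖲 c) * ∑ j, (𝖲 (u j) ⊗ₜ[k] (1 : H)) * Δ (v j) := by simp [G, hy]
      _ = 1 ⊗ₜ (𝖲 c * y) := by rw [sum_antipode_tmul_mul_comul hy]; simp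
  have G_assoc (t : H ⊗[k] H) (c : H) : G (TensorProduct.assoc k H H H (t ⊗ₜ c)) =
      TensorProduct.map 𝖲 𝖲 (TensorProduct.comm k H H t) * Δ c := by
    induction t with
    | zero => simp
    | tmul u v => simp [G, ← mul_assoc]
    | add u v hu hv => simp only [add_tmul, map_add, hu, hv, add_mul]
  ext y
  obtain ⟨r, a, b, h⟩ := exists_fin_sum_tmul (Δ y)
  calc (WithConv.toConv F * WithConv.toConv Δ) y
      = ∑ j, TensorProduct.map 𝖲 𝖲 (TensorProduct.comm k H H (Δ (a j))) * Δ (b j) := by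
        simp [LinearMap.convMul_apply, h, F]
    _ = ∑ j, (1 : H) ⊗ₜ[k] (𝖲 (a j) * b j) := by
        simp only [← G_assoc, ← G_comul, sum_coassoc h]
    _ = (1 : WithConv (H →ₗ[k] H ⊗[k] H)) y := by
        rw [← tmul_sum, sum_antipode_mul h]
        simp [LinearMap.convOne_apply, Algebra.algebraMap_eq_smul_one,
          Algebra.TensorProduct.one_def]

lemma comul_antipode_antipode (x : H) :
    Δ (𝖲 (𝖲 x)) = TensorProduct.map (𝖲 ∘ₗ 𝖲) (𝖲 ∘ₗ 𝖲) (Δ x) := by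
  obtain ⟨r, a, b, h⟩ := exists_fin_sum_tmul (Δ x)
  rw [comul_antipode, comul_antipode, h]
  simp

lemma sum_tmul_mul_comul_antipode {r : ℕ} {x : H} {a b : Fin r → H}
    (h : Δ x = ∑ j, a j ⊗ₜ[k] b j) :
    ∑ j, ((1 : H) ⊗ₜ[k] a j) * Δ (𝖲 (b j)) = 𝖲 x ⊗ₜ 1 := by
  let G : H ⊗[k] (H ⊗[k] H) →ₗ[k] H ⊗[k] H :=
    (TensorProduct.comm k H H).toLinearMap ∘ₗ TensorProduct.map (LinearMap.mul' k H) 𝖲 ∘ₗ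
      (TensorProduct.assoc k H H H).symm.toLinearMap ∘ₗ
      TensorProduct.map LinearMap.id (TensorProduct.map 𝖲 LinearMap.id)
  have G_tmul (c : H) (t : H ⊗[k] H) : G (c ⊗ₜ t) =
      (1 ⊗ₜ c) * TensorProduct.map 𝖲 𝖲 (TensorProduct.comm k H H t) := by
    induction t with
    | zero => simp
    | tmul u v => simp [G]
    | add u v hu hv => simp only [tmul_add, map_add, hu, hv, mul_add]
  have G_assoc (t : H ⊗[k] H) (c : H) : G (TensorProduct.assoc k H H H (t ⊗ₜ c)) =
      𝖲 c ⊗ₜ LinearMap.mul' k H ((𝖲).lTensor H t) := by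
    induction t with
    | zero => simp
    | tmul u v => simp [G]
    | add u v hu hv => simp only [add_tmul, tmul_add, map_add, hu, hv]
  calc _ = ∑ j, G (a j ⊗ₜ Δ (b j)) := by simp only [comul_antipode, G_tmul]
    _ = ∑ j, 𝖲 (ε (a j) • b j) ⊗ₜ (1 : H) := by
      simp only [sum_coassoc h, G_assoc, mul_antipode_lTensor_comul_apply,
        Algebra.algebraMap_eq_smul_one, tmul_smul, map_smul, smul_tmul']
    _ = 𝖲 x ⊗ₜ 1 := by rw [← sum_tmul, ← map_sum, sum_counit_smul_right h]

/-- The left translation `h ↦ ∑ p(h₁) h₂` of `H` by a functional, often written `h ↼ p`. -/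
def hitL (p : H →ₗ[k] k) : H →ₗ[k] H := contractLeft p ∘ₗ Δ

/-- The right translation `h ↦ ∑ q(h₂) h₁` of `H` by a functional, often written `q ⇀ h`. -/
def hitR (q : H →ₗ[k] k) : H →ₗ[k] H := contractRight q ∘ₗ Δ

lemma hitL_apply (p : H →ₗ[k] k) (x : H) : hitL p x = contractLeft p (Δ x) := rfl

lemma hitR_apply (p : H →ₗ[k] k) (x : H) : hitR p x = contractRight p (Δ x) := rfl

lemma apply_hitR (p q : H →ₗ[k] k) (x : H) : p (hitR q x) = q (hitL p x) :=
  apply_contractRight p q _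

@[simp] lemma hitL_counit (x : H) : hitL ε x = x := by
  obtain ⟨r, a, b, h⟩ := exists_fin_sum_tmul (Δ x)
  simpa [hitL_apply, h] using sum_counit_smul_right h

@[simp] lemma hitR_counit (x : H) : hitR ε x = x := by
  obtain ⟨r, a, b, h⟩ := exists_fin_sum_tmul (Δ x)
  simpa [hitR_apply, h] using sum_counit_smul_left h

@[simp] lemma counit_hitL (p : H →ₗ[k] k) (x : H) : ε (hitL p x) = p x := by
  rw [← apply_hitR, hitR_counit]

@[simp] lemma counit_hitR (p : H →ₗ[k] k) (x : H) : ε (hitR p x) = p x := by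
  rw [apply_hitR, hitL_counit]

lemma comul_hitL (p : H →ₗ[k] k) (x : H) :
    Δ (hitL p x) = TensorProduct.map (hitL p) LinearMap.id (Δ x) := by
  obtain ⟨r, a, b, h⟩ := exists_fin_sum_tmul (Δ x)
  have contract_assoc (t : H ⊗[k] H) (c : H) :
      contractLeft p (TensorProduct.assoc k H H H (t ⊗ₜ c)) = contractLeft p t ⊗ₜ c := by
    induction t with
    | zero => simp
    | tmul u v => simp [smul_tmul']
    | add u v hu hv => simp only [add_tmul, map_add, hu, hv]
  have := sum_coassoc h (contractLeft p)
  simp only [contract_assoc, contractLeft_tmul] at this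
  simpa [hitL_apply, h] using this

lemma comul_hitR (p : H →ₗ[k] k) (x : H) :
    Δ (hitR p x) = TensorProduct.map LinearMap.id (hitR p) (Δ x) := by
  obtain ⟨r, a, b, h⟩ := exists_fin_sum_tmul (Δ x)
  have contract_assoc_symm (t : H ⊗[k] H) (c : H) :
      contractRight p ((TensorProduct.assoc k H H H).symm (c ⊗ₜ t)) = c ⊗ₜ contractRight p t := by
    induction t with
    | zero => simp
    | tmul u v => simp
    | add u v hu hv => simp only [tmul_add, map_add, hu, hv]
  have := sum_coassoc h (contractRight p ∘ₗ (TensorProduct.assoc k H H H).symm.toLinearMap)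
  simp only [LinearMap.comp_apply, LinearEquiv.coe_coe, contract_assoc_symm,
    LinearEquiv.symm_apply_apply, contractRight_tmul] at this
  simpa [hitR_apply, h] using this.symm

lemma eq_hitL_of_comul {T : H →ₗ[k] H}
    (hT : ∀ x, Δ (T x) = TensorProduct.map T LinearMap.id (Δ x)) : T = hitL (ε ∘ₗ T) := by
  ext x
  calc T x = hitL ε (T x) := (hitL_counit _).symm
    _ = hitL (ε ∘ₗ T) x := by rw [hitL_apply, hT, contractLeft_map]; rfl

lemma hitL_hitL (p q : H →ₗ[k] k) (x : H) : hitL q (hitL p x) = hitL (q ∘ₗ hitL p) x := by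
  rw [hitL_apply, comul_hitL, contractLeft_map]
  rfl

lemma hitL_mem {C : Submodule k H}
    (hC : ∀ c ∈ C, Δ c ∈ LinearMap.range (TensorProduct.map C.subtype C.subtype))
    (p : H →ₗ[k] k) {x : H} (hx : x ∈ C) : hitL p x ∈ C :=
  contractLeft_mem (hC x hx) p

end Hopf

/-! ### Integrals and the antipode -/

section Integral

open HopfAlgebra

variable {k : Type} [Field k] {H : Type} [Ring H] [HopfAlgebra k H]

local notation "Δ" => Coalgebra.comul (R := k) (A := H)
local notation "ε" => Coalgebra.counit (R := k) (A := H)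
local notation "𝖲" => HopfAlgebra.antipode k (A := H)

section HopfSubalgebra

variable {K : Subalgebra k H} {Λ : H}

lemma one_tmul_mul_comul_integral (hK : IsHopfSubalgebra k H K)
    (hΛ : IsIdempotentIntegral k H K Λ) {x : H} (hx : x ∈ K) :
    (1 ⊗ₜ x) * Δ Λ = (𝖲 x ⊗ₜ 1) * Δ Λ := by
  obtain ⟨r, a, b, -, hb, h⟩ := exists_fin_sum_tmul_of_mem (hK.1 x hx)
  rw [one_tmul_mul_comul h]
  conv_rhs => rw [← sum_counit_smul_left h]
  simp only [map_sum, sum_tmul, Finset.sum_mul]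
  refine Finset.sum_congr rfl fun j _ => ?_
  rw [(hΛ.2.2 _ (hb j)).1, map_smul, map_smul, ← smul_tmul', smul_mul_assoc, mul_smul_comm]

lemma comul_integral_mul_tmul_one (hK : IsHopfSubalgebra k H K)
    (hΛ : IsIdempotentIntegral k H K Λ) {x : H} (hx : x ∈ K) :
    Δ Λ * (x ⊗ₜ 1) = Δ Λ * (1 ⊗ₜ 𝖲 x) := by
  obtain ⟨r, a, b, ha, -, h⟩ := exists_fin_sum_tmul_of_mem (hK.1 x hx)
  rw [comul_mul_tmul_one h]
  conv_rhs => rw [← sum_counit_smul_right h]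
  simp only [map_sum, tmul_sum, Finset.mul_sum]
  refine Finset.sum_congr rfl fun j _ => ?_
  rw [(hΛ.2.2 _ (ha j)).2]
  simp

-- The elements `∑ p(Λ₁) Λ₂` form a left ideal of `K`, which contains `1 = ∑ S(Λ₁) Λ₂`.
lemma exists_hitL_integral_eq_one (hK : IsHopfSubalgebra k H K)
    (hΛ : IsIdempotentIntegral k H K Λ) : ∃ l : H →ₗ[k] k, hitL l Λ = 1 := by
  let J : Submodule k H := LinearMap.range (contractLeftHom (Δ Λ))
  have mul_mem_J {x : H} (hx : x ∈ K) {y : H} (hy : y ∈ J) : x * y ∈ J := by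
    obtain ⟨f, rfl⟩ := hy
    refine ⟨f ∘ₗ LinearMap.mulLeft k (𝖲 x), ?_⟩
    have := congrArg (contractLeft f) (one_tmul_mul_comul_integral hK hΛ hx)
    rw [contractLeft_tmul_mul, contractLeft_tmul_mul] at this
    simpa [LinearMap.mulLeft_one] using! this.symm
  have comul_mem : Δ Λ ∈ LinearMap.range (TensorProduct.map K.toSubmodule.subtype J.subtype) :=
    mem_range_map_subtype (contractRight_mem (hK.1 _ hΛ.1)) (fun p => ⟨p, rfl⟩)
  obtain ⟨r, a, b, ha, hb, h⟩ := exists_fin_sum_tmul_of_mem comul_mem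
  have sum_eq_one : ∑ j, 𝖲 (a j) * b j = 1 := by
    rw [sum_antipode_mul h, hΛ.2.1, one_smul]
  have one_mem : (1 : H) ∈ J :=
    sum_eq_one ▸ J.sum_mem fun j _ => mul_mem_J (hK.2 _ (ha j)) (hb j)
  exact one_mem

end HopfSubalgebra

lemma isHopfSubalgebra_top : IsHopfSubalgebra k H ⊤ :=
  ⟨fun _ _ => mem_range_map_subtype (fun _ => trivial) (fun _ => trivial), fun _ _ => trivial⟩

lemma exists_left_integral {R A : Type*} [CommRing R] [Ring A] [Algebra R A] [IsSemisimpleRing A]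
    (e : A →ₐ[R] R) : ∃ z : A, e z = 1 ∧ ∀ x, x * z = e x • z := by
  obtain ⟨J, hJ⟩ := exists_isCompl (RingHom.ker e.toRingHom : Submodule A A)
  obtain ⟨i, hi, j, hj, hij⟩ := Submodule.mem_sup.1
    (show (1 : A) ∈ (RingHom.ker e.toRingHom : Submodule A A) ⊔ J by rw [hJ.sup_eq_top]; trivial)
  have e_i : e i = 0 := hi
  have e_j : e j = 1 := by simpa [e_i] using congrArg e hij
  refine ⟨j, e_j, fun x => sub_eq_zero.1 ?_⟩
  have mem_J : x * j - e x • j ∈ J := by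
    refine J.sub_mem (J.smul_mem x hj) ?_
    rw [Algebra.smul_def]
    exact J.smul_mem _ hj
  have mem_ker : e (x * j - e x • j) = 0 := by simp [e_j]
  have : x * j - e x • j ∈ (RingHom.ker e.toRingHom : Submodule A A) ⊓ J := ⟨mem_ker, mem_J⟩
  rwa [hJ.inf_eq_bot] at this

lemma exists_integral [IsSemisimpleRing H] : ∃ Λ : H, IsIdempotentIntegral k H ⊤ Λ := by
  obtain ⟨z, hz, hl⟩ := exists_left_integral (Bialgebra.counitAlgHom k H)
  obtain ⟨w, hw, hr⟩ := exists_left_integral (A := Hᵐᵒᵖ)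
    ((Bialgebra.counitAlgHom k H).fromOpposite fun _ _ => mul_comm _ _)
  have counit_w : ε w.unop = 1 := hw
  have counit_z : ε z = 1 := hz
  have w_mul (x : H) : w.unop * x = ε x • w.unop :=
    congrArg MulOpposite.unop (hr (MulOpposite.op x))
  have w_eq_z : w.unop = z := by
    calc w.unop = w.unop * z := by rw [w_mul, counit_z, one_smul]
      _ = z := by rw [hl, Bialgebra.counitAlgHom_apply, counit_w, one_smul]
  rw [w_eq_z] at w_mul
  exact ⟨z, trivial, counit_z, fun x _ => ⟨hl x, w_mul x⟩⟩

lemma antipode_integral {Λ : H} (hΛ : IsIdempotentIntegral k H ⊤ Λ)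
    (hS : Function.Surjective 𝖲) : 𝖲 Λ = Λ := by
  obtain ⟨y, hy⟩ := hS Λ
  have counit_y : ε y = 1 := by rw [← counit_antipode (R := k) y, hy, hΛ.2.1]
  calc 𝖲 Λ = 𝖲 (Λ * y) := by rw [(hΛ.2.2 y trivial).2, counit_y, one_smul]
    _ = Λ * 𝖲 Λ := by rw [antipode_mul_antidistrib, hy]
    _ = Λ := by rw [(hΛ.2.2 _ trivial).2, counit_antipode, hΛ.2.1, one_smul]

section DualIntegral

variable {Λ : H} {l : H →ₗ[k] k}

lemma contractLeft_antipode_mul (hΛ : IsIdempotentIntegral k H ⊤ Λ) (hl : hitL l Λ = 1) (y : H) :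
    contractLeft (l ∘ₗ LinearMap.mulLeft k (𝖲 y)) (Δ Λ) = y := by
  have := congrArg (contractLeft l)
    (one_tmul_mul_comul_integral isHopfSubalgebra_top hΛ (x := y) trivial)
  rw [contractLeft_tmul_mul, contractLeft_tmul_mul] at this
  rw [hitL_apply] at hl
  simpa [LinearMap.mulLeft_one, hl] using this.symm

lemma contractLeft_mul_eq_antipode (hΛ : IsIdempotentIntegral k H ⊤ Λ) (hl : hitL l Λ = 1)
    (y : H) : contractLeft (l ∘ₗ LinearMap.mulRight k y) (Δ Λ) = 𝖲 y := by
  have := congrArg (contractLeft l)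
    (comul_integral_mul_tmul_one isHopfSubalgebra_top hΛ (x := y) trivial)
  rw [contractLeft_mul_tmul, contractLeft_mul_tmul] at this
  rw [hitL_apply] at hl
  simpa [LinearMap.mulRight_one, hl] using this

lemma antipode_injective (hΛ : IsIdempotentIntegral k H ⊤ Λ) (hl : hitL l Λ = 1) :
    Function.Injective 𝖲 := fun x y hxy => by
  rw [← contractLeft_antipode_mul hΛ hl x, ← contractLeft_antipode_mul hΛ hl y, hxy]

lemma contractRightHom_injective (hΛ : IsIdempotentIntegral k H ⊤ Λ) (hl : hitL l Λ = 1) :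
    Function.Injective (contractRightHom (Δ Λ)) := by
  refine (injective_iff_map_eq_zero _).2 fun f hf => LinearMap.ext fun y => ?_
  have := apply_contractRight (l ∘ₗ LinearMap.mulLeft k (𝖲 y)) f (Δ Λ)
  rw [contractLeft_antipode_mul hΛ hl, show contractRight f (Δ Λ) = 0 from hf] at this
  simpa using this.symm

lemma functional_integral_eq_one (hl : hitL l Λ = 1) : l Λ = 1 := by
  rw [← counit_hitL, hl, Bialgebra.counit_one]

variable [FiniteDimensional k H]

lemma contractLeftHom_injective (hΛ : IsIdempotentIntegral k H ⊤ Λ) (hl : hitL l Λ = 1) :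
    Function.Injective (contractLeftHom (Δ Λ)) :=
  (LinearMap.injective_iff_surjective_of_finrank_eq_finrank
    (Subspace.dual_finrank_eq (K := k) (V := H))).2 fun y =>
      ⟨_, contractLeft_antipode_mul hΛ hl y⟩

lemma antipode_bijective (hΛ : IsIdempotentIntegral k H ⊤ Λ) (hl : hitL l Λ = 1) :
    Function.Bijective 𝖲 :=
  ⟨antipode_injective hΛ hl, LinearMap.injective_iff_surjective.1 (antipode_injective hΛ hl)⟩

lemma functional_mul_comm (hΛ : IsIdempotentIntegral k H ⊤ Λ) (hl : hitL l Λ = 1) (x y : H) :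
    l (x * y) = l (𝖲 (𝖲 y) * x) :=
  LinearMap.congr_fun (contractLeftHom_injective hΛ hl
    ((contractLeft_mul_eq_antipode hΛ hl y).trans
      (contractLeft_antipode_mul hΛ hl (𝖲 y)).symm)) x

lemma eq_zero_of_functional_mul (hΛ : IsIdempotentIntegral k H ⊤ Λ) (hl : hitL l Λ = 1) {w : H}
    (h : ∀ z, l (w * z) = 0) : w = 0 := by
  obtain ⟨y, rfl⟩ := (antipode_bijective hΛ hl).2 w
  have y_eq := contractLeft_antipode_mul hΛ hl y
  rw [show l ∘ₗ LinearMap.mulLeft k (𝖲 y) = 0 from LinearMap.ext h] at y_eq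
  rw [← y_eq]
  simp [contractLeft]

lemma eq_smul_of_hitL (hΛ : IsIdempotentIntegral k H ⊤ Λ) (hl : hitL l Λ = 1)
    {p : H →ₗ[k] k} {c : k} (h : hitL p Λ = c • 1) : p = c • l := by
  refine contractLeftHom_injective hΛ hl ?_
  rw [map_smul]
  change hitL p Λ = c • hitL l Λ
  rw [h, hl]

lemma hitL_functional (hΛ : IsIdempotentIntegral k H ⊤ Λ) (hl : hitL l Λ = 1) (h : H) :
    hitL l h = l h • 1 := by
  refine sub_eq_zero.1 ((Module.forall_dual_apply_eq_zero_iff k _).1 fun q => ?_)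
  have : q ∘ₗ hitL l = q 1 • l := by
    refine eq_smul_of_hitL hΛ hl ?_
    rw [← hitL_hitL, hl, hitL_apply, Bialgebra.comul_one]
    simp [Algebra.TensorProduct.one_def]
  have := LinearMap.congr_fun this h
  simp only [LinearMap.comp_apply, LinearMap.smul_apply] at this
  simp [this, mul_comm]

lemma hitR_functional (hΛ : IsIdempotentIntegral k H ⊤ Λ) (hl : hitL l Λ = 1) (h : H) :
    hitR l h = l h • hitR l Λ := by
  refine sub_eq_zero.1 ((Module.forall_dual_apply_eq_zero_iff k _).1 fun q => ?_)
  have : l ∘ₗ hitL q = q (hitR l Λ) • l := by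
    refine eq_smul_of_hitL hΛ hl ?_
    rw [← hitL_hitL, hitL_functional hΛ hl, apply_hitR]
  have := LinearMap.congr_fun this h
  simp only [LinearMap.comp_apply, LinearMap.smul_apply] at this
  rw [map_sub, apply_hitR, this]
  simp [mul_comm]

lemma isGroupLikeElem_hitR (hΛ : IsIdempotentIntegral k H ⊤ Λ) (hl : hitL l Λ = 1) :
    IsGroupLikeElem k (hitR l Λ) where
  counit_eq_one := by rw [counit_hitR, functional_integral_eq_one hl]
  comul_eq_tmul_self := by
    have map_hitR (t : H ⊗[k] H) : TensorProduct.map LinearMap.id (hitR l) t =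
        contractRight l t ⊗ₜ hitR l Λ := by
      induction t with
      | zero => simp
      | tmul u v => simp [hitR_functional hΛ hl v, smul_tmul']
      | add u v hu hv => simp only [add_tmul, map_add, hu, hv]
    rw [comul_hitR, map_hitR, hitR_apply]

lemma hitR_functional_mul_integral (hΛ : IsIdempotentIntegral k H ⊤ Λ) (hl : hitL l Λ = 1) :
    contractRight (l ∘ₗ LinearMap.mulRight k (hitR l Λ)) (Δ Λ) = 1 := by
  set a := hitR l Λ
  have a_groupLike : IsGroupLikeElem k a := isGroupLikeElem_hitR hΛ hl
  have hitR_mul : hitR l (Λ * a) = a := by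
    rw [(hΛ.2.2 a trivial).2, a_groupLike.counit_eq_one, one_smul]
  rw [hitR_apply, Bialgebra.comul_mul, a_groupLike.comul_eq_tmul_self,
    contractRight_mul_tmul] at hitR_mul
  rw [← mul_one (contractRight _ _), ← a_groupLike.mul_antipode_cancel, ← mul_assoc, hitR_mul]

lemma functional_hitR_mul_comm (hΛ : IsIdempotentIntegral k H ⊤ Λ) (hl : hitL l Λ = 1)
    (x z : H) : l (x * z * hitR l Λ) = l (z * 𝖲 (𝖲 x) * hitR l Λ) := by
  let m : H →ₗ[k] k := l ∘ₗ LinearMap.mulRight k (hitR l Λ)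
  have m_integral : contractRight m (Δ Λ) = 1 := hitR_functional_mul_integral hΛ hl
  have contract_mulLeft : contractRight (m ∘ₗ LinearMap.mulLeft k x) (Δ Λ) = 𝖲 x := by
    have := congrArg (contractRight m)
      (one_tmul_mul_comul_integral isHopfSubalgebra_top hΛ (x := x) trivial)
    rw [contractRight_tmul_mul, contractRight_tmul_mul] at this
    simpa [LinearMap.mulLeft_one, m_integral] using this
  have contract_mulRight : contractRight (m ∘ₗ LinearMap.mulRight k (𝖲 (𝖲 x))) (Δ Λ) = 𝖲 x := by
    have := congrArg (contractRight m)
      (comul_integral_mul_tmul_one isHopfSubalgebra_top hΛ (x := 𝖲 x) trivial)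
    rw [contractRight_mul_tmul, contractRight_mul_tmul] at this
    simpa [LinearMap.mulRight_one, m_integral] using this.symm
  exact LinearMap.congr_fun (contractRightHom_injective hΛ hl
    (contract_mulLeft.trans contract_mulRight.symm)) z

-- Radford's formula for `S⁴`, in the case where `H` is unimodular.
lemma antipode_four_mul (hΛ : IsIdempotentIntegral k H ⊤ Λ) (hl : hitL l Λ = 1) (x : H) :
    𝖲 (𝖲 (𝖲 (𝖲 x))) * hitR l Λ = hitR l Λ * x := by
  set a := hitR l Λ
  have SSa : 𝖲 (𝖲 a) = a := (isGroupLikeElem_hitR hΛ hl).antipode_antipode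
  refine (sub_eq_zero.1 (eq_zero_of_functional_mul hΛ hl fun z => ?_)).symm
  rw [sub_mul, map_sub, sub_eq_zero]
  calc l (a * x * z) = l (x * z * a) := by
        rw [functional_mul_comm hΛ hl (x * z) a, SSa, mul_assoc]
    _ = l (z * (𝖲 (𝖲 x) * a)) := by rw [functional_hitR_mul_comm hΛ hl, mul_assoc]
    _ = l (𝖲 (𝖲 (𝖲 (𝖲 x))) * a * z) := by
      rw [functional_mul_comm hΛ hl z, antipode_mul_antidistrib, antipode_mul_antidistrib, SSa]

lemma exists_antipode_sq_pow_eq_one (hΛ : IsIdempotentIntegral k H ⊤ Λ) (hl : hitL l Λ = 1) :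
    ∃ n : ℕ, 0 < n ∧ (𝖲 ∘ₗ 𝖲) ^ n = 1 := by
  have : Finite (GroupLike k H) := (linearIndep_groupLikeVal (R := k) (A := H)).finite
  obtain ⟨n, hn, pow_n⟩ := (isOfFinOrder_of_finite
    (⟨_, isGroupLikeElem_hitR hΛ hl⟩ : GroupLike k H)).exists_pow_eq_one
  set a := hitR l Λ
  have a_pow : a ^ n = 1 := by simpa using congrArg GroupLike.val pow_n
  refine ⟨2 * n, by omega, LinearMap.ext fun x => ?_⟩
  have pow_mul_a (j : ℕ) : ((𝖲 ∘ₗ 𝖲) ^ (2 * j)) x * a ^ j = a ^ j * x := by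
    induction j with
    | zero => simp
    | succ j ih =>
      have pow_succ_apply :
          ((𝖲 ∘ₗ 𝖲) ^ (2 * (j + 1))) x = 𝖲 (𝖲 (𝖲 (𝖲 (((𝖲 ∘ₗ 𝖲) ^ (2 * j)) x)))) := by
        rw [show 2 * (j + 1) = 1 + (1 + 2 * j) by ring, pow_add, pow_add, pow_one]
        rfl
      rw [pow_succ_apply, pow_succ', ← mul_assoc, antipode_four_mul hΛ hl, mul_assoc, ih,
        ← mul_assoc]
  simpa [a_pow] using pow_mul_a n

lemma trace_antipode_sq_comp_hitL (hΛ : IsIdempotentIntegral k H ⊤ Λ) (hl : hitL l Λ = 1)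
    (f : H →ₗ[k] k) : LinearMap.trace k H ((𝖲 ∘ₗ 𝖲) ∘ₗ hitL f) = l 1 * f Λ := by
  obtain ⟨r, a, b, h⟩ := exists_fin_sum_tmul (Δ Λ)
  have comp_eq_sum : (𝖲 ∘ₗ 𝖲) ∘ₗ hitL f =
      ∑ j, ((l ∘ₗ LinearMap.mulLeft k (a j)) ∘ₗ hitL f).smulRight (𝖲 (b j)) := by
    ext x
    have := contractLeft_mul_eq_antipode hΛ hl (hitL f x)
    simp only [h, map_sum, contractLeft_tmul] at this
    simp [← this, LinearMap.sum_apply]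
  have sum_eq : ∑ j, a j * hitL f (𝖲 (b j)) = f Λ • 1 := by
    have := congrArg (contractLeft f) (sum_tmul_mul_comul_antipode h)
    simpa only [map_sum, contractLeft_tmul_mul, LinearMap.mulLeft_one, LinearMap.comp_id,
      contractLeft_tmul, ← hitL_apply, antipode_integral hΛ (antipode_bijective hΛ hl).2] using this
  calc LinearMap.trace k H ((𝖲 ∘ₗ 𝖲) ∘ₗ hitL f) = l (∑ j, a j * hitL f (𝖲 (b j))) := by
        rw [comp_eq_sum, map_sum, map_sum]
        simp only [LinearMap.trace_smulRight]
        rfl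
    _ = l 1 * f Λ := by rw [sum_eq, map_smul, smul_eq_mul, mul_comm]

end DualIntegral

end Integral

/-! ### Traces of operators of finite order -/

section FiniteOrder

variable {k V : Type*} [Field k] [AddCommGroup V] [Module k V] {f g : Module.End k V} {n : ℕ}

lemma isSemisimple_of_pow_eq_one [CharZero k] (hn : 0 < n) (hf : f ^ n = 1) : f.IsSemisimple := by
  refine Module.End.isSemisimple_of_squarefree_aeval_eq_zero
    (p := (Polynomial.X ^ n - Polynomial.C 1 : Polynomial k)) ?_ (by simp [hf])
  exact (Polynomial.separable_X_pow_sub_C (1 : k) (by exact_mod_cast hn.ne')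
    one_ne_zero).squarefree

lemma pow_eq_one_of_hasEigenvalue (hf : f ^ n = 1) {μ : k} (hμ : f.HasEigenvalue μ) :
    μ ^ n = 1 := by
  obtain ⟨v, hv⟩ := hμ.exists_hasEigenvector
  have pow_smul_eq : μ ^ n • v = v := by rw [← hv.pow_apply, hf, Module.End.one_apply]
  exact smul_left_injective k hv.2 (by simpa using pow_smul_eq)

lemma apply_eq_inv_smul_of_mul_eq_one (hfg : g * f = 1) {μ : k} {v : V}
    (hv : v ∈ f.eigenspace μ) : g v = μ⁻¹ • v := by
  have g_f : μ • g v = v := by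
    rw [← map_smul, ← Module.End.mem_eigenspace_iff.1 hv]
    exact LinearMap.congr_fun hfg v
  rcases eq_or_ne μ 0 with rfl | hμ
  · rw [← g_f]
    simp
  · rw [eq_inv_smul_iff₀ hμ, g_f]

variable [FiniteDimensional k V]

lemma trace_eq_sum_finrank_eigenspace [IsAlgClosed k] (hf : f.IsSemisimple) {c : k → k}
    (h : ∀ μ, ∀ v ∈ f.eigenspace μ, g v = c μ • v) :
    LinearMap.trace k V g =
      ∑ μ ∈ f.finite_hasEigenvalue.toFinset, (Module.finrank k (f.eigenspace μ) : k) * c μ := by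
  classical
  have isInternal : DirectSum.IsInternal f.eigenspace :=
    DirectSum.isInternal_submodule_of_iSupIndep_of_iSup_eq_top
      f.eigenspaces_iSupIndep hf.iSup_eigenspace_eq_top
  have mapsTo (μ : k) : Set.MapsTo g (f.eigenspace μ) (f.eigenspace μ) := fun v hv => by
    rw [h μ v hv]
    exact Submodule.smul_mem _ _ hv
  rw [LinearMap.trace_eq_sum_trace_restrict' isInternal f.finite_hasEigenvalue mapsTo]
  refine Finset.sum_congr rfl fun μ _ => ?_
  have restrict_eq : g.restrict (mapsTo μ) = c μ • LinearMap.id := by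
    ext v
    exact h μ v v.2
  simp [restrict_eq, mul_comm]

lemma exists_trace_eq_sum_roots [CharZero k] [IsAlgClosed k] (hn : 0 < n) (hf : f ^ n = 1)
    (hfg : g * f = 1) :
    ∃ (s : Finset k) (d : k → ℕ), (∀ μ ∈ s, μ ^ n = 1) ∧
      LinearMap.trace k V f = ∑ μ ∈ s, d μ * μ ∧
      LinearMap.trace k V g = ∑ μ ∈ s, d μ * μ⁻¹ := by
  have semisimple := isSemisimple_of_pow_eq_one hn hf
  exact ⟨f.finite_hasEigenvalue.toFinset, fun μ => Module.finrank k (f.eigenspace μ),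
    fun μ hμ => pow_eq_one_of_hasEigenvalue hf (by simpa using hμ),
    trace_eq_sum_finrank_eigenspace semisimple fun μ v hv => Module.End.mem_eigenspace_iff.1 hv,
    trace_eq_sum_finrank_eigenspace semisimple fun μ v hv =>
      apply_eq_inv_smul_of_mul_eq_one hfg hv⟩

end FiniteOrder

/-- A fixed embedding of the field of algebraic numbers into an algebraically closed field of
characteristic zero. -/
def algebraicNumberEmbedding (F : Type*) [Field F] [CharZero F] [IsAlgClosed F] :
    AlgebraicClosure ℚ →+* F :=
  letI : Algebra ℚ (AlgebraicClosure ℚ) := AlgebraicClosure.instAlgebra ℚ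
  haveI : Algebra.IsAlgebraic ℚ (AlgebraicClosure ℚ) := AlgebraicClosure.isAlgebraic ℚ
  (IsAlgClosed.lift : AlgebraicClosure ℚ →ₐ[ℚ] F).toRingHom

section NonnegAlgebraic

variable {k : Type*} [Field k] [CharZero k] [IsAlgClosed k]

/-- `t : k` comes from an algebraic number which is a nonnegative real under the fixed embedding
into `ℂ`. This gives a notion of positivity for sums such as `|∑ ζᵢ|²`, with `ζᵢ : k` roots of
unity, although `k` itself carries no order. -/
def IsNonnegAlgebraic (t : k) : Prop :=
  ∃ e : AlgebraicClosure ℚ, algebraicNumberEmbedding k e = t ∧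
    ∃ r : ℝ, 0 ≤ r ∧ algebraicNumberEmbedding ℂ e = r

lemma IsNonnegAlgebraic.eq_zero_of_sum_eq_zero {ι : Type*} [Fintype ι] {t : ι → k}
    (ht : ∀ i, IsNonnegAlgebraic (t i)) (h : ∑ i, t i = 0) (i : ι) : t i = 0 := by
  choose e e_eq r r_nonneg r_eq using ht
  have sum_e : ∑ i, e i = 0 :=
    (algebraicNumberEmbedding k).injective (by simpa [e_eq] using h)
  have sum_r : ∑ i, r i = 0 := by
    have := congrArg (algebraicNumberEmbedding ℂ) sum_e
    simp only [map_sum, r_eq, map_zero] at this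
    exact_mod_cast this
  have r_i : r i = 0 :=
    (Finset.sum_eq_zero_iff_of_nonneg fun i _ => r_nonneg i).1 sum_r i (Finset.mem_univ i)
  have e_i : e i = 0 := (algebraicNumberEmbedding ℂ).injective (by simp [r_eq, r_i])
  rw [← e_eq, e_i, map_zero]

lemma exists_algebraicNumberEmbedding_eq {n : ℕ} (hn : 0 < n) {μ : k} (hμ : μ ^ n = 1) :
    ∃ ν : AlgebraicClosure ℚ, ν ^ n = 1 ∧ algebraicNumberEmbedding k ν = μ := by
  have : NeZero n := ⟨hn.ne'⟩
  obtain ⟨ζ, hζ⟩ := HasEnoughRootsOfUnity.exists_primitiveRoot (AlgebraicClosure ℚ) n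
  obtain ⟨i, -, hi⟩ := (hζ.map_of_injective
    (f := algebraicNumberEmbedding k) (RingHom.injective _)).eq_pow_of_pow_eq_one hμ
  exact ⟨ζ ^ i, by rw [← pow_mul, mul_comm, pow_mul, hζ.pow_eq_one, one_pow], by simpa using hi⟩

lemma isNonnegAlgebraic_sum_inv_mul_sum {n : ℕ} (hn : 0 < n) (s : Finset k) (d : k → ℕ)
    (hs : ∀ μ ∈ s, μ ^ n = 1) :
    IsNonnegAlgebraic ((∑ μ ∈ s, d μ * μ⁻¹) * ∑ μ ∈ s, (d μ : k) * μ) := by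
  choose! ν ν_pow ν_eq using fun μ (hμ : μ ∈ s) => exists_algebraicNumberEmbedding_eq hn (hs μ hμ)
  let τ := algebraicNumberEmbedding ℂ
  refine ⟨(∑ μ ∈ s, d μ * (ν μ)⁻¹) * ∑ μ ∈ s, d μ * ν μ, ?_,
    Complex.normSq (∑ μ ∈ s, d μ * τ (ν μ)), Complex.normSq_nonneg _, ?_⟩
  · simp only [map_mul, map_sum, map_natCast, map_inv₀]
    congr 1 <;> exact Finset.sum_congr rfl fun μ hμ => by rw [ν_eq μ hμ]
  · rw [Complex.normSq_eq_conj_mul_self]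
    simp only [map_mul, map_sum, map_natCast, map_inv₀]
    congr 1
    refine Finset.sum_congr rfl fun μ hμ => ?_
    have τ_pow : (τ (ν μ)) ^ n = 1 := by rw [← map_pow, ν_pow μ hμ, map_one]
    rw [← Complex.inv_eq_conj (Complex.norm_eq_one_of_pow_eq_one τ_pow hn.ne')]

lemma isNonnegAlgebraic_trace_mul_trace {m : Type*} [Fintype m] [DecidableEq m] {n : ℕ}
    (hn : 0 < n) {u v : Matrix m m k} (hvu : v * u = 1) {c : k} (hu : u ^ n = c • 1) :
    IsNonnegAlgebraic (v.trace * u.trace) := by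
  rcases isEmpty_or_nonempty m with hm | hm
  · exact ⟨0, by simp [Matrix.trace], 0, le_rfl, by simp⟩
  have hc : c ≠ 0 := by
    rintro rfl
    refine (IsUnit.of_mul_eq_one_right v hvu).pow n |>.ne_zero ?_
    rw [hu, zero_smul]
  obtain ⟨s, hs⟩ := IsAlgClosed.exists_pow_nat_eq c hn
  have hs0 : s ≠ 0 := by
    rintro rfl
    exact hc (by rw [← hs, zero_pow hn.ne'])
  -- Rescaling by an `n`-th root of `c` reduces to `u ^ n = 1`.
  obtain ⟨S, d, hS, trace_u, trace_v⟩ := exists_trace_eq_sum_roots (k := k)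
    (f := Matrix.toLin' (s⁻¹ • u)) (g := Matrix.toLin' (s • v)) hn
    (by rw [← Matrix.toLin'_pow, smul_pow, hu, inv_pow, hs, inv_smul_smul₀ hc, Matrix.toLin'_one]
        rfl)
    (by rw [Module.End.mul_eq_comp, ← Matrix.toLin'_mul, smul_mul_smul_comm, mul_inv_cancel₀ hs0,
          hvu, one_smul, Matrix.toLin'_one]
        rfl)
  convert isNonnegAlgebraic_sum_inv_mul_sum hn S d hS using 1
  rw [← trace_u, ← trace_v, Matrix.trace_toLin'_eq, Matrix.trace_toLin'_eq, Matrix.trace_smul,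
    Matrix.trace_smul, smul_mul_smul_comm, mul_inv_cancel₀ hs0, one_smul]

end NonnegAlgebraic

section Matrix

variable {k m : Type*} [Field k] [Fintype m] [DecidableEq m]

lemma exists_eq_smul_one_of_commute {X : Matrix m m k} (hX : ∀ Y, Commute Y X) :
    ∃ c : k, X = c • 1 := by
  obtain ⟨c, hc⟩ := Matrix.mem_range_scalar_of_commute_single
    (M := X) fun a b _ => hX (Matrix.single a b 1)
  exact ⟨c, by rw [← hc, Matrix.scalar_apply, Matrix.smul_one_eq_diagonal]⟩

lemma eq_smul_one_of_mul_eq_smul {X : Matrix m m k} (hX : X ≠ 0) {e : Matrix m m k → k}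
    (hl : ∀ Y, Y * X = e Y • X) (hr : ∀ Y, X * Y = e Y • X) (Y : Matrix m m k) :
    Y = e Y • 1 := by
  obtain ⟨c, rfl⟩ := exists_eq_smul_one_of_commute fun Y => (hl Y).trans (hr Y).symm
  have hc : c ≠ 0 := by
    rintro rfl
    exact hX (zero_smul _ _)
  refine smul_right_injective _ hc ?_
  simpa [smul_comm c] using hl Y

lemma trace_mul_trace_ne_zero [CharZero k] [Nonempty m] {p q : k}
    (h : (p • 1 : Matrix m m k) * q • 1 = 1) :
    (p • 1 : Matrix m m k).trace * (q • 1 : Matrix m m k).trace ≠ 0 := by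
  have hpq : p * q = 1 := by
    simpa [mul_comm] using congrFun (congrFun h (Classical.arbitrary m)) (Classical.arbitrary m)
  simp [left_ne_zero_of_mul_eq_one hpq, right_ne_zero_of_mul_eq_one hpq]

end Matrix

section Blocks

variable {k : Type*} [Field k] {ι : Type*} [DecidableEq ι] {d : ι → Type*}
  [∀ i, Fintype (d i)] [∀ i, DecidableEq (d i)]

/-- The matrix `u` with `l(X) = Tr(X u)` for `X` in the `i`-th factor of a product of matrix
algebras, see `apply_single_eq_trace`. -/
def blockDensity (l : (∀ i, Matrix (d i) (d i) k) →ₗ[k] k) (i : ι) : Matrix (d i) (d i) k :=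
  Matrix.of fun a b => l (Pi.single i (Matrix.single b a 1))

variable {l : (∀ i, Matrix (d i) (d i) k) →ₗ[k] k} {θ : Module.End k (∀ i, Matrix (d i) (d i) k)}

lemma apply_single_eq_trace (l : (∀ i, Matrix (d i) (d i) k) →ₗ[k] k) (i : ι)
    (X : Matrix (d i) (d i) k) : l (Pi.single i X) = (X * blockDensity l i).trace := by
  let lᵢ := l ∘ₗ LinearMap.single k (fun i => Matrix (d i) (d i) k) i
  have lᵢ_single (a b : d i) : lᵢ (Matrix.single a b (X a b)) = X a b * blockDensity l i b a := by
    rw [← mul_one (X a b), ← smul_eq_mul (X a b), ← Matrix.smul_single, map_smul]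
    simp [lᵢ, blockDensity]
  calc l (Pi.single i X) = lᵢ (∑ a, ∑ b, Matrix.single a b (X a b)) := by
        rw [← Matrix.matrix_eq_sum_single]
        rfl
    _ = (X * blockDensity l i).trace := by
        simp [lᵢ_single, Matrix.trace, Matrix.mul_apply]

lemma mul_blockDensity (hl : ∀ x y, l (x * y) = l (θ y * x)) (y : ∀ i, Matrix (d i) (d i) k)
    (i : ι) : y i * blockDensity l i = blockDensity l i * θ y i := by
  refine Matrix.ext_iff_trace_mul_left.2 fun X => ?_
  have := hl (Pi.single i X) y
  rw [← Pi.single_mul_left, ← Pi.single_mul_right, apply_single_eq_trace,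
    apply_single_eq_trace] at this
  rw [← mul_assoc, this, mul_assoc, Matrix.trace_mul_comm, mul_assoc]

lemma mul_blockDensity_pow (hl : ∀ x y, l (x * y) = l (θ y * x)) (n : ℕ)
    (y : ∀ i, Matrix (d i) (d i) k) (i : ι) :
    y i * blockDensity l i ^ n = blockDensity l i ^ n * ((θ ^ n) y) i := by
  induction n generalizing y with
  | zero => simp
  | succ n ih =>
    rw [pow_succ', ← mul_assoc, mul_blockDensity hl, mul_assoc, ih, ← mul_assoc, pow_succ θ]
    rfl

lemma exists_blockDensity_pow_eq_smul_one (hl : ∀ x y, l (x * y) = l (θ y * x)) {n : ℕ}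
    (hθ : θ ^ n = 1) (i : ι) : ∃ c : k, blockDensity l i ^ n = c • 1 :=
  exists_eq_smul_one_of_commute fun Y => by
    simpa [Commute, SemiconjBy, hθ] using mul_blockDensity_pow hl n (Pi.single i Y) i

lemma det_blockDensity_ne_zero (hnd : ∀ w, (∀ z, l (w * z) = 0) → w = 0) (i : ι) :
    (blockDensity l i).det ≠ 0 := by
  intro det_eq_zero
  obtain ⟨v, hv, mulVec_v⟩ := Matrix.exists_mulVec_eq_zero_iff.2 det_eq_zero
  have mul_vecMulVec : blockDensity l i * Matrix.vecMulVec v v = 0 := by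
    rw [Matrix.mul_vecMulVec, mulVec_v, Matrix.zero_vecMulVec]
  have vecMulVec_eq_zero := hnd (Pi.single i (Matrix.vecMulVec v v)) fun z => by
    rw [← Pi.single_mul_left, apply_single_eq_trace, Matrix.trace_mul_comm, ← mul_assoc,
      mul_vecMulVec, zero_mul, Matrix.trace_zero]
  rw [Pi.single_eq_zero_iff, Matrix.vecMulVec_eq_zero] at vecMulVec_eq_zero
  exact hv (or_self_iff.1 vecMulVec_eq_zero)

end Blocks

section BlockTrace

variable {k : Type*} [Field k] {ι : Type*} {d : ι → Type*} [∀ i, Fintype (d i)]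
  {l : (∀ i, Matrix (d i) (d i) k) →ₗ[k] k} {θ : Module.End k (∀ i, Matrix (d i) (d i) k)}

lemma trace_eq_sum_trace_mul_trace [Fintype ι] {u v : ∀ i, Matrix (d i) (d i) k}
    (h : ∀ y i, θ y i = v i * y i * u i) :
    LinearMap.trace k _ θ = ∑ i, (v i).trace * (u i).trace := by
  classical
  have basis_repr (z : ∀ i, Matrix (d i) (d i) k) (i : ι) (a b : d i) :
      (Pi.basis fun i => Matrix.stdBasis k (d i) (d i)).repr z ⟨i, (a, b)⟩ = z i a b := by
    rw [Pi.basis_repr]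
    simp [Matrix.stdBasis]
  rw [LinearMap.trace_eq_matrix_trace k (Pi.basis fun i => Matrix.stdBasis k (d i) (d i)),
    Matrix.trace, Fintype.sum_sigma]
  refine Finset.sum_congr rfl fun i _ => ?_
  rw [Matrix.trace, Matrix.trace, Finset.sum_mul_sum, ← Finset.univ_product_univ,
    Finset.sum_product]
  refine Finset.sum_congr rfl fun a _ => Finset.sum_congr rfl fun b _ => ?_
  rw [Matrix.diag_apply, LinearMap.toMatrix_apply, basis_repr, h]
  simp [Matrix.mul_apply, Matrix.stdBasis_eq_single, Matrix.single_apply, ite_and]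

variable [CharZero k] [IsAlgClosed k] [Finite ι]

-- The trace is a sum of terms `|∑ ζᵢ|²`, and the term at a one-dimensional block is `1`.
lemma trace_ne_zero_of_functional_mul_comm (hl : ∀ x y, l (x * y) = l (θ y * x))
    (hnd : ∀ w, (∀ z, l (w * z) = 0) → w = 0) {n : ℕ} (hn : 0 < n) (hθ : θ ^ n = 1)
    {e : (∀ i, Matrix (d i) (d i) k) → k} {Λ : ∀ i, Matrix (d i) (d i) k} (hΛ : Λ ≠ 0)
    (hΛl : ∀ x, x * Λ = e x • Λ) (hΛr : ∀ x, Λ * x = e x • Λ) :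
    LinearMap.trace k _ θ ≠ 0 := by
  classical
  have : Fintype ι := Fintype.ofFinite ι
  set u := blockDensity l
  have inv_mul (i : ι) : (u i)⁻¹ * u i = 1 :=
    Matrix.nonsing_inv_mul _ (det_blockDensity_ne_zero hnd i).isUnit
  have θ_eq (y : ∀ i, Matrix (d i) (d i) k) (i : ι) : θ y i = (u i)⁻¹ * y i * u i := by
    rw [mul_assoc, mul_blockDensity hl, ← mul_assoc, inv_mul, one_mul]
  obtain ⟨i, Λ_i⟩ := Function.ne_iff.1 hΛ
  have eq_smul_one (Y : Matrix (d i) (d i) k) : ∃ q : k, Y = q • 1 :=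
    ⟨_, eq_smul_one_of_mul_eq_smul Λ_i (e := fun Y => e (Pi.single i Y))
      (fun Y => by simpa using congrFun (hΛl (Pi.single i Y)) i)
      (fun Y => by simpa using congrFun (hΛr (Pi.single i Y)) i) Y⟩
  have : Nonempty (d i) := not_isEmpty_iff.1 fun _ => Λ_i (Subsingleton.elim _ _)
  rw [trace_eq_sum_trace_mul_trace θ_eq]
  intro sum_eq_zero
  have term_eq_zero := IsNonnegAlgebraic.eq_zero_of_sum_eq_zero (fun i =>
    isNonnegAlgebraic_trace_mul_trace hn (inv_mul i)
      (exists_blockDensity_pow_eq_smul_one hl hθ i).choose_spec) sum_eq_zero i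
  have inv_mul_i := inv_mul i
  obtain ⟨p, hp⟩ := eq_smul_one (u i)⁻¹
  obtain ⟨q, hq⟩ := eq_smul_one (u i)
  rw [hp, hq] at term_eq_zero inv_mul_i
  exact trace_mul_trace_ne_zero inv_mul_i term_eq_zero

end BlockTrace

section LarsonRadford

variable {k : Type} [Field k] [CharZero k] [IsAlgClosed k] {H : Type} [Ring H] [HopfAlgebra k H]
  [FiniteDimensional k H] [IsSemisimpleRing H] {Λ : H} {l : H →ₗ[k] k}

-- Larson and Radford: a semisimple Hopf algebra in characteristic zero is cosemisimple.
lemma functional_one_ne_zero (hΛ : IsIdempotentIntegral k H ⊤ Λ) (hl : hitL l Λ = 1) :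
    l 1 ≠ 0 := by
  let S : H →ₗ[k] H := HopfAlgebra.antipode k
  have trace_eq : LinearMap.trace k H (S ∘ₗ S) = l 1 := by
    have := trace_antipode_sq_comp_hitL hΛ hl Coalgebra.counit
    rwa [show hitL Coalgebra.counit = LinearMap.id from LinearMap.ext hitL_counit,
      LinearMap.comp_id, hΛ.2.1, mul_one] at this
  obtain ⟨n, d, -, ⟨e⟩⟩ := IsSemisimpleRing.exists_algEquiv_pi_matrix_of_isAlgClosed k H
  obtain ⟨N, hN, pow_N⟩ := exists_antipode_sq_pow_eq_one hΛ hl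
  rw [← trace_eq, ← LinearMap.trace_conj' _ e.toLinearEquiv]
  refine trace_ne_zero_of_functional_mul_comm (l := l ∘ₗ e.symm.toLinearMap) (n := N)
    (e := fun x => Coalgebra.counit (R := k) (e.symm x)) (Λ := e Λ)
    (fun x y => ?_) (fun w hw => ?_) hN ?_ (fun Λ_eq => ?_) (fun x => ?_) (fun x => ?_)
  · simpa [LinearEquiv.conj_apply] using functional_mul_comm hΛ hl (e.symm x) (e.symm y)
  · simpa using eq_zero_of_functional_mul hΛ hl (w := e.symm w) fun z => by simpa using hw (e z)
  · change LinearEquiv.conjRingEquiv e.toLinearEquiv (S ∘ₗ S) ^ N = 1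
    rw [← map_pow, pow_N, map_one]
  · have := hΛ.2.1
    simp [show Λ = 0 by simpa using Λ_eq] at this
  · simpa using congrArg e (hΛ.2.2 (e.symm x) trivial).1
  · simpa using congrArg e (hΛ.2.2 (e.symm x) trivial).2

end LarsonRadford

/-! ### The algebra of colinear endomorphisms -/

section Jacobson

variable {k R : Type*} [Field k] [Ring R] [Algebra k R] {A : Subalgebra k R}
  [FiniteDimensional k A] {s : Rˣ}

lemma exists_mem_jacobson_eq_conj (hA : ∀ T ∈ A, s * T * ↑s⁻¹ ∈ A) {T : A}
    (hT : T ∈ Ring.jacobson A) : ∃ U ∈ Ring.jacobson A, (s * T * ↑s⁻¹ : R) = U := by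
  let σ : A →ₐ[k] A :=
    ((MulSemiringAction.toAlgHom k R (ConjAct.toConjAct s)).comp A.val).codRestrict A
      fun T => hA T T.2
  have σ_injective : Function.Injective σ.toLinearMap := fun T U h =>
    Subtype.ext (MulAction.injective (ConjAct.toConjAct s) (congrArg Subtype.val h))
  have : RingHomSurjective σ.toRingHom := ⟨LinearMap.injective_iff_surjective.1 σ_injective⟩
  exact ⟨σ T, Ring.le_comap_jacobson σ.toRingHom hT, rfl⟩

lemma exists_mem_jacobson_pow_mul (hA : ∀ T ∈ A, s * T * ↑s⁻¹ ∈ A) {T : A}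
    (hT : T ∈ Ring.jacobson A) (n : ℕ) : ∃ U ∈ Ring.jacobson A, (s : R) ^ n * T = U * s ^ n := by
  induction n with
  | zero => exact ⟨T, hT, by simp⟩
  | succ n ih =>
    obtain ⟨U, hU, pow_mul⟩ := ih
    obtain ⟨W, hW, conj⟩ := exists_mem_jacobson_eq_conj hA hU
    refine ⟨W, hW, ?_⟩
    rw [← conj, pow_succ', mul_assoc, pow_mul]
    simp [mul_assoc]

lemma exists_mem_jacobson_pow_eq (hA : ∀ T ∈ A, s * T * ↑s⁻¹ ∈ A) {T : A}
    (hT : T ∈ Ring.jacobson A) (n : ℕ) :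
    ∃ U ∈ Ring.jacobson A ^ n, ((s : R) * T) ^ n = U * s ^ n := by
  induction n with
  | zero => exact ⟨1, by rw [Submodule.pow_zero, Ideal.one_eq_top]; trivial, by simp⟩
  | succ n ih =>
    obtain ⟨U, hU, pow_eq⟩ := ih
    obtain ⟨W, hW, pow_mul⟩ := exists_mem_jacobson_pow_mul hA hT (n + 1)
    refine ⟨U * W, by rw [Submodule.pow_succ]; exact Ideal.mul_mem_mul hU hW, ?_⟩
    rw [pow_succ, pow_eq, mul_assoc, ← mul_assoc (_ ^ n), ← pow_succ, pow_mul,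
      MulMemClass.coe_mul, mul_assoc]

lemma isNilpotent_mul_of_mem_jacobson (hA : ∀ T ∈ A, s * T * ↑s⁻¹ ∈ A) {T : A}
    (hT : T ∈ Ring.jacobson A) : IsNilpotent ((s : R) * T) := by
  have : IsArtinianRing A := IsArtinianRing.of_finite k A
  obtain ⟨n, pow_jacobson⟩ := IsArtinianRing.isNilpotent_jacobson_bot (R := A)
  obtain ⟨U, hU, pow_eq⟩ := exists_mem_jacobson_pow_eq hA hT n
  rw [← Ideal.jacobson_bot, pow_jacobson] at hU
  exact ⟨n, by rw [pow_eq, (Submodule.mem_bot _).1 hU, ZeroMemClass.coe_zero, zero_mul]⟩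

end Jacobson

section Colinear

variable {k : Type*} [Field k] {H : Type*} [Ring H] [HopfAlgebra k H]

local notation "Δ" => Coalgebra.comul (R := k) (A := H)
local notation "ε" => Coalgebra.counit (R := k) (A := H)
local notation "𝖲" => HopfAlgebra.antipode k (A := H)

/-- The algebra of endomorphisms of `H` which are colinear for the coaction on the right tensor
factor and linear for right multiplication by `K`. Colinear endomorphisms are the translations
`hitL f`, and linearity over `K` makes `f` invariant under `K`, so this is the algebra of
`K`-invariant functionals on `H`. -/
def colinearEnd (K : Subalgebra k H) : Subalgebra k (Module.End k H) where
  carrier := {T | (∀ x, Δ (T x) = TensorProduct.map T LinearMap.id (Δ x)) ∧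
    ∀ x, ∀ a ∈ K, T (x * a) = T x * a}
  mul_mem' := by
    rintro T U ⟨hT, hT'⟩ ⟨hU, hU'⟩
    refine ⟨fun x => ?_, fun x a ha => ?_⟩
    · rw [Module.End.mul_apply, hT, hU, ← LinearMap.comp_apply, ← TensorProduct.map_comp]
      rfl
    · simp only [Module.End.mul_apply, hU' x a ha, hT' _ a ha]
  add_mem' := by
    rintro T U ⟨hT, hT'⟩ ⟨hU, hU'⟩
    refine ⟨fun x => ?_, fun x a ha => ?_⟩
    · simp [hT, hU, TensorProduct.map_add_left]
    · simp [hU' x a ha, hT' x a ha, add_mul]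
  algebraMap_mem' c := by
    refine ⟨fun x => ?_, fun x a _ => ?_⟩
    · rw [Algebra.algebraMap_eq_smul_one, TensorProduct.map_smul_left]
      simp only [LinearMap.smul_apply, Module.End.one_apply, map_smul]
      rw [Module.End.one_eq_id, TensorProduct.map_id]
      rfl
    · simp [Algebra.algebraMap_eq_smul_one]

variable {K : Subalgebra k H}

lemma eq_hitL_of_mem_colinearEnd {T : Module.End k H} (hT : T ∈ colinearEnd K) :
    T = hitL (ε ∘ₗ T) :=
  eq_hitL_of_comul hT.1

lemma antipode_sq_pow_mul (n : ℕ) (x y : H) :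
    ((𝖲 ∘ₗ 𝖲) ^ n) (x * y) = ((𝖲 ∘ₗ 𝖲) ^ n) x * ((𝖲 ∘ₗ 𝖲) ^ n) y := by
  induction n with
  | zero => simp
  | succ n ih => simp [pow_succ', ih, HopfAlgebra.antipode_mul_antidistrib]

lemma comul_antipode_sq_pow (n : ℕ) (x : H) : Δ (((𝖲 ∘ₗ 𝖲) ^ n) x) =
    TensorProduct.map ((𝖲 ∘ₗ 𝖲) ^ n) ((𝖲 ∘ₗ 𝖲) ^ n) (Δ x) := by
  induction n with
  | zero =>
    rw [pow_zero, Module.End.one_eq_id, TensorProduct.map_id]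
    rfl
  | succ n ih =>
    rw [pow_succ', Module.End.mul_eq_comp, TensorProduct.map_comp,
      LinearMap.comp_apply (TensorProduct.map _ _), ← ih]
    exact comul_antipode_antipode _

end Colinear

section Semisimple

variable {k : Type} [Field k] {H : Type} [Ring H] [HopfAlgebra k H] {K : Subalgebra k H} {κ : H}

local notation "Δ" => Coalgebra.comul (R := k) (A := H)
local notation "ε" => Coalgebra.counit (R := k) (A := H)
local notation "𝖲" => HopfAlgebra.antipode k (A := H)

lemma hitL_mulRight_mem_colinearEnd (hK : IsHopfSubalgebra k H K)
    (hκ : IsIdempotentIntegral k H K κ) (g : H →ₗ[k] k) :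
    hitL (g ∘ₗ LinearMap.mulRight k κ) ∈ colinearEnd K := by
  refine ⟨comul_hitL _, fun x a ha => ?_⟩
  set f := g ∘ₗ LinearMap.mulRight k κ
  obtain ⟨r, b, c, hb, -, h⟩ := exists_fin_sum_tmul_of_mem (hK.1 a ha)
  have f_mul (j : Fin r) : f ∘ₗ LinearMap.mulRight k (b j) = ε (b j) • f := by
    ext x
    simp [f, mul_assoc, (hκ.2.2 (b j) (hb j)).1]
  have contractLeft_f_mul (j : Fin r) :
      contractLeft (f ∘ₗ LinearMap.mulRight k (b j)) (Δ x) = ε (b j) • hitL f x := by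
    rw [f_mul]
    exact map_smul (contractLeftHom (Δ x)) _ _
  calc hitL f (x * a) = ∑ j, ε (b j) • (hitL f x * c j) := by
        rw [hitL_apply, Bialgebra.comul_mul, h, Finset.mul_sum, map_sum]
        simp only [contractLeft_mul_tmul, contractLeft_f_mul, smul_mul_assoc]
    _ = hitL f x * a := by
        simp only [← mul_smul_comm, ← Finset.mul_sum, sum_counit_smul_right h]

lemma antipode_sq_pow_mem (hK : IsHopfSubalgebra k H K) (n : ℕ) {x : H} (hx : x ∈ K) :
    ((𝖲 ∘ₗ 𝖲) ^ n) x ∈ K := by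
  induction n with
  | zero => simpa
  | succ n ih =>
    rw [pow_succ', Module.End.mul_apply]
    exact hK.2 _ (hK.2 _ ih)

lemma antipode_sq_pow_conj_mem (hK : IsHopfSubalgebra k H K) {m n : ℕ}
    (h : (𝖲 ∘ₗ 𝖲) ^ m * (𝖲 ∘ₗ 𝖲) ^ n = 1) {T : Module.End k H} (hT : T ∈ colinearEnd K) :
    (𝖲 ∘ₗ 𝖲) ^ m * T * (𝖲 ∘ₗ 𝖲) ^ n ∈ colinearEnd K := by
  refine ⟨fun x => ?_, fun x a ha => ?_⟩
  · simp only [Module.End.mul_apply]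
    rw [comul_antipode_sq_pow, hT.1, comul_antipode_sq_pow, ← LinearMap.comp_apply,
      ← TensorProduct.map_comp, ← LinearMap.comp_apply, ← TensorProduct.map_comp,
      LinearMap.comp_id, ← Module.End.mul_eq_comp ((𝖲 ∘ₗ 𝖲) ^ m) ((𝖲 ∘ₗ 𝖲) ^ n), h]
    rfl
  · simp only [Module.End.mul_apply]
    rw [antipode_sq_pow_mul, hT.2 _ _ (antipode_sq_pow_mem hK n ha), antipode_sq_pow_mul,
      ← Module.End.mul_apply _ ((𝖲 ∘ₗ 𝖲) ^ n) a, h, Module.End.one_apply]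

variable [FiniteDimensional k H] [CharZero k] [IsAlgClosed k] [IsSemisimpleRing H]
  {Λ : H} {l : H →ₗ[k] k}

lemma counit_apply_eq_zero_of_mem_jacobson (hK : IsHopfSubalgebra k H K)
    (hΛ : IsIdempotentIntegral k H ⊤ Λ) (hl : hitL l Λ = 1) {T : colinearEnd K}
    (hT : T ∈ Ring.jacobson (colinearEnd K)) : ε ((T : Module.End k H) Λ) = 0 := by
  obtain ⟨n, hn, pow_n⟩ := exists_antipode_sq_pow_eq_one hΛ hl
  let s : (Module.End k H)ˣ := Units.ofPowEqOne (𝖲 ∘ₗ 𝖲) n pow_n hn.ne'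
  have conj_mem (U : Module.End k H) (hU : U ∈ colinearEnd K) : s * U * ↑s⁻¹ ∈ colinearEnd K := by
    have := antipode_sq_pow_conj_mem hK (m := 1) (n := n - 1)
      (by rw [← pow_add, Nat.add_sub_cancel' hn, pow_n]) hU
    rwa [pow_one] at this
  have trace_eq_zero : LinearMap.trace k H (s * (T : Module.End k H)) = 0 :=
    (LinearMap.isNilpotent_trace_of_isNilpotent
      (isNilpotent_mul_of_mem_jacobson conj_mem hT)).eq_zero
  have trace_eq : LinearMap.trace k H (s * (T : Module.End k H)) =
      l 1 * ε ((T : Module.End k H) Λ) := by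
    rw [eq_hitL_of_mem_colinearEnd T.2, counit_hitL]
    exact trace_antipode_sq_comp_hitL hΛ hl _
  exact (mul_eq_zero.1 (trace_eq.symm.trans trace_eq_zero)).resolve_left
    (functional_one_ne_zero hΛ hl)

-- The form `(T, U) ↦ ε(T U Λ)` is nondegenerate, and it vanishes on the radical.
lemma isSemisimpleRing_colinearEnd (hK : IsHopfSubalgebra k H K)
    (hκ : IsIdempotentIntegral k H K κ) : IsSemisimpleRing (colinearEnd K) := by
  have : IsArtinianRing (colinearEnd K) := IsArtinianRing.of_finite k (colinearEnd K)
  rw [IsArtinianRing.isSemisimpleRing_iff_jacobson, eq_bot_iff]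
  intro T hT
  obtain ⟨Λ, hΛ⟩ := exists_integral (k := k) (H := H)
  obtain ⟨l, hl⟩ := exists_hitL_integral_eq_one isHopfSubalgebra_top hΛ
  have T_integral : (T : Module.End k H) Λ = 0 := by
    refine (Module.forall_dual_apply_eq_zero_iff k _).1 fun g => ?_
    have := counit_apply_eq_zero_of_mem_jacobson hK hΛ hl
      (Ideal.mul_mem_left _ ⟨_, hitL_mulRight_mem_colinearEnd hK hκ g⟩ hT)
    rwa [MulMemClass.coe_mul, Module.End.mul_apply, counit_hitL, LinearMap.comp_apply,
      LinearMap.mulRight_apply, ← T.2.2 _ _ hκ.1, (hΛ.2.2 κ trivial).2, hκ.2.1, one_smul] at this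
  have counit_comp : ε ∘ₗ (T : Module.End k H) = 0 := by
    refine contractLeftHom_injective hΛ hl ?_
    rw [map_zero, ← T_integral]
    exact (LinearMap.congr_fun (eq_hitL_of_mem_colinearEnd T.2) Λ).symm
  refine (Submodule.mem_bot _).2 (Subtype.ext ?_)
  rw [eq_hitL_of_mem_colinearEnd T.2, counit_comp]
  ext x
  simp [hitL, contractLeft]

end Semisimple

/-! ### Cosets are stable under the conjugate -/

section Subcoalgebra

variable {k : Type} [Field k] {H : Type} [Ring H] [HopfAlgebra k H] {C D : Submodule k H}

local notation "Δ" => Coalgebra.comul (R := k) (A := H)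

lemma IsSubcoalgebra.mul (hC : IsSubcoalgebra k H C) (hD : IsSubcoalgebra k H D) :
    IsSubcoalgebra k H (C * D) := by
  intro z hz
  induction hz using Submodule.mul_induction_on' with
  | mem_mul_mem x hx y hy =>
    obtain ⟨r, a, b, ha, hb, h⟩ := exists_fin_sum_tmul_of_mem (hC x hx)
    obtain ⟨r', a', b', ha', hb', h'⟩ := exists_fin_sum_tmul_of_mem (hD y hy)
    rw [Bialgebra.comul_mul, h, h', Finset.sum_mul_sum]
    refine Submodule.sum_mem _ fun i _ => Submodule.sum_mem _ fun j _ => ?_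
    exact ⟨⟨_, Submodule.mul_mem_mul (ha i) (ha' j)⟩ ⊗ₜ ⟨_, Submodule.mul_mem_mul (hb i) (hb' j)⟩,
      by simp⟩
  | add x _ y _ hx hy =>
    rw [map_add]
    exact Submodule.add_mem _ hx hy

lemma isSubcoalgebra_sSup {s : Set (Submodule k H)} (hs : ∀ D ∈ s, IsSubcoalgebra k H D) :
    IsSubcoalgebra k H (sSup s) := by
  have sSup_le_comap : sSup s ≤
      (LinearMap.range (TensorProduct.map (sSup s).subtype (sSup s).subtype)).comap Δ :=
    sSup_le fun D hD x hx => mem_range_map_subtype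
      (fun q => le_sSup hD (contractRight_mem (hs D hD x hx) q))
      (fun p => le_sSup hD (contractLeft_mem (hs D hD x hx) p))
  exact sSup_le_comap

lemma IsSubcoalgebra.inf (hC : IsSubcoalgebra k H C) (hD : IsSubcoalgebra k H D) :
    IsSubcoalgebra k H (C ⊓ D) := fun x hx =>
  mem_range_map_subtype
    (fun q => ⟨contractRight_mem (hC x hx.1) q, contractRight_mem (hD x hx.2) q⟩)
    (fun p => ⟨contractLeft_mem (hC x hx.1) p, contractLeft_mem (hD x hx.2) p⟩)

lemma isSubcoalgebra_conjK (K : Subalgebra k H) (κ : H) (C : Submodule k H) :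
    IsSubcoalgebra k H (conjK k H K κ C) :=
  isSubcoalgebra_sSup fun _ hD => hD.1.1

end Subcoalgebra

section Character

variable {k : Type} [Field k] {H : Type} [Ring H] [HopfAlgebra k H] {D : Submodule k H}

local notation "Δ" => Coalgebra.comul (R := k) (A := H)

/-- The action of the functionals on `H` on a subcoalgebra, by left translation. -/
def hitLRestrict (hD : IsSubcoalgebra k H D) : (H →ₗ[k] k) →ₗ[k] Module.End k D where
  toFun p := (hitL p).restrict fun _ hx => hitL_mem hD p hx
  map_add' p q := by
    ext x
    exact map_add (contractLeftHom (Δ x)) p q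
  map_smul' c p := by
    ext x
    exact map_smul (contractLeftHom (Δ x)) c p

lemma hitLRestrict_apply (hD : IsSubcoalgebra k H D) (p : H →ₗ[k] k) (x : D) :
    (hitLRestrict hD p x : H) = hitL p x := rfl

lemma hitLRestrict_mul (hD : IsSubcoalgebra k H D) (p q : H →ₗ[k] k) :
    hitLRestrict hD q * hitLRestrict hD p = hitLRestrict hD (q ∘ₗ hitL p) := by
  ext x
  exact hitL_hitL p q x

lemma hitLRestrict_eq_zero (hD : IsSubcoalgebra k H D) {p : H →ₗ[k] k} (hp : D ≤ p.ker) :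
    hitLRestrict hD p = 0 := by
  ext x
  obtain ⟨r, a, b, ha, -, h⟩ := exists_fin_sum_tmul_of_mem (hD x x.2)
  have p_a (j : Fin r) : p (a j) = 0 := hp (ha j)
  simp [hitLRestrict_apply, hitL_apply, h, p_a]

lemma contractLeft_comm (p : H →ₗ[k] k) (t : H ⊗[k] H) :
    contractLeft p (TensorProduct.comm k H H t) = contractRight p t := by
  induction t with
  | zero => simp
  | tmul x y => simp
  | add x y hx hy => simp only [map_add, hx, hy]

variable [FiniteDimensional k H]

/-- The character of a subcoalgebra `D`, viewed as a right comodule: the element of `H` at which a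
functional takes the trace of its action on `D`. -/
def character (hD : IsSubcoalgebra k H D) : H :=
  (Module.evalEquiv k H).symm (LinearMap.trace k D ∘ₗ hitLRestrict hD)

lemma apply_character (hD : IsSubcoalgebra k H D) (p : H →ₗ[k] k) :
    p (character hD) = LinearMap.trace k D (hitLRestrict hD p) :=
  LinearMap.congr_fun ((Module.evalEquiv k H).apply_symm_apply _) p

lemma character_mem (hD : IsSubcoalgebra k H D) : character hD ∈ D := by
  by_contra character_notMem
  obtain ⟨p, hp, D_le_ker⟩ := Submodule.exists_le_ker_of_notMem character_notMem
  exact hp (by rw [apply_character, hitLRestrict_eq_zero hD D_le_ker, map_zero])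

lemma isCocomm_character (hD : IsSubcoalgebra k H D) : IsCocomm k H (character hD) := by
  refine eq_of_forall_contractLeft_eq fun p =>
    sub_eq_zero.1 ((Module.forall_dual_apply_eq_zero_iff k _).1 fun q => ?_)
  have apply_hitL_character (p q : H →ₗ[k] k) : q (hitL p (character hD)) =
      LinearMap.trace k D (hitLRestrict hD q * hitLRestrict hD p) := by
    rw [hitLRestrict_mul, ← apply_character, LinearMap.comp_apply]
  rw [map_sub, contractLeft_comm, sub_eq_zero]
  calc q (hitR p (character hD)) = p (hitL q (character hD)) := apply_hitR q p _
    _ = q (hitL p (character hD)) := by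
      rw [apply_hitL_character, apply_hitL_character, LinearMap.trace_mul_comm]

end Character

-- Over a field the freeness hypotheses of the library lemma hold, but instance search does not find
-- them for a tensor product of two submodules.
lemma eq_zero_of_isIdempotentElem_of_trace_eq_zero {k V : Type*} [Field k] [CharZero k]
    [AddCommGroup V] [Module k V] [FiniteDimensional k V] {E : Module.End k V}
    (hE : IsIdempotentElem E) (trace_E : LinearMap.trace k V E = 0) : E = 0 :=
  LinearMap.IsIdempotentElem.eq_zero_of_trace_eq_zero hE trace_E

section IdempotentFunctional

variable {k : Type} [Field k] {H : Type} [Ring H] [HopfAlgebra k H] {C D : Submodule k H}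
  {f : H →ₗ[k] k} {r : ℕ} {p q : Fin r → (H →ₗ[k] k)}

local notation "Δ" => Coalgebra.comul (R := k) (A := H)

lemma hitL_hitR_comm (p q : H →ₗ[k] k) (x : H) : hitL p (hitR q x) = hitR q (hitL p x) := by
  rw [hitL_apply, comul_hitR, contractLeft_map]
  rfl

lemma sum_hitL_mul_hitL (hf : ∀ x y, f (x * y) = ∑ j, p j x * q j y) (x y : H) :
    ∑ j, hitL (p j) x * hitL (q j) y = hitL f (x * y) := by
  obtain ⟨m, a, b, h⟩ := exists_fin_sum_tmul (Δ x)
  obtain ⟨m', a', b', h'⟩ := exists_fin_sum_tmul (Δ y)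
  simp only [hitL_apply, Bialgebra.comul_mul, h, h', Finset.sum_mul_sum, map_sum,
    Algebra.TensorProduct.tmul_mul_tmul, contractLeft_tmul, hf, Finset.sum_smul,
    smul_mul_smul_comm]
  rw [Finset.sum_comm]
  exact Finset.sum_congr rfl fun i _ => Finset.sum_comm

/-- The action on `D ⊗ C` of the coproduct `∑ pⱼ ⊗ qⱼ` of a functional. -/
def tensorHit (hC : IsSubcoalgebra k H C) (hD : IsSubcoalgebra k H D)
    (p q : Fin r → (H →ₗ[k] k)) : Module.End k (D ⊗[k] C) :=
  ∑ j, TensorProduct.map (hitLRestrict hD (p j)) (hitLRestrict hC (q j))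

lemma tensorHit_tmul (hC : IsSubcoalgebra k H C) (hD : IsSubcoalgebra k H D) (x : D) (y : C) :
    tensorHit hC hD p q (x ⊗ₜ y) = ∑ j, hitLRestrict hD (p j) x ⊗ₜ[k] hitLRestrict hC (q j) y := by
  simp only [tensorHit, LinearMap.sum_apply, TensorProduct.map_tmul]

lemma map_subtype_tensorHit (hC : IsSubcoalgebra k H C) (hD : IsSubcoalgebra k H D)
    (x : D) (y : C) : TensorProduct.map D.subtype C.subtype (tensorHit hC hD p q (x ⊗ₜ y)) =
      ∑ j, hitL (p j) (x : H) ⊗ₜ[k] hitL (q j) (y : H) := by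
  simp only [tensorHit_tmul, map_sum, TensorProduct.map_tmul]
  rfl

lemma isIdempotentElem_tensorHit (hC : IsSubcoalgebra k H C) (hD : IsSubcoalgebra k H D)
    (hf : ∀ x, f (hitL f x) = f x) (hpq : ∀ x y, f (x * y) = ∑ j, p j x * q j y) :
    IsIdempotentElem (tensorHit hC hD p q) := by
  have sum_apply_hitL (x y : H) (u v : H →ₗ[k] k) :
      ∑ j, u (hitL (p j) x) * v (hitL (q j) y) = f (hitR u x * hitR v y) := by
    simp only [hpq, apply_hitR]
  refine TensorProduct.ext' fun x y => ?_
  apply TensorProduct.map_injective_of_flat_flat (R := k) D.subtype C.subtype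
    (Submodule.subtype_injective _) (Submodule.subtype_injective _)
  rw [Module.End.mul_apply, map_subtype_tensorHit, tensorHit_tmul, map_sum, map_sum]
  simp only [map_subtype_tensorHit]
  refine eq_of_forall_contractLeft_eq fun u =>
    sub_eq_zero.1 ((Module.forall_dual_apply_eq_zero_iff k _).1 fun v => ?_)
  simp only [map_sub, map_sum, contractLeft_tmul, map_smul, smul_eq_mul, sum_apply_hitL,
    hitLRestrict_apply, ← hitL_hitR_comm]
  rw [← map_sum, sum_hitL_mul_hitL hpq, hf, sub_self]

variable [FiniteDimensional k H]

lemma trace_tensorHit (hC : IsSubcoalgebra k H C) (hD : IsSubcoalgebra k H D)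
    (hpq : ∀ x y, f (x * y) = ∑ j, p j x * q j y) :
    LinearMap.trace k _ (tensorHit hC hD p q) = f (character hD * character hC) := by
  simp only [tensorHit, map_sum, LinearMap.trace_tensorProduct', ← apply_character, ← hpq]

lemma exists_apply_mul_eq_sum (f : H →ₗ[k] k) : ∃ (r : ℕ) (p q : Fin r → (H →ₗ[k] k)),
    ∀ x y, f (x * y) = ∑ j, p j x * q j y := by
  obtain ⟨t, ht⟩ := (TensorProduct.dualDistribEquiv k H H).surjective (f ∘ₗ LinearMap.mul' k H)
  obtain ⟨r, p, q, rfl⟩ := exists_fin_sum_tmul t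
  refine ⟨r, p, q, fun x y => ?_⟩
  have eval_tmul := LinearMap.congr_fun ht (x ⊗ₜ y)
  simp only [map_sum, LinearMap.sum_apply] at eval_tmul
  exact eval_tmul.symm

-- An idempotent functional acts on `D ⊗ C` by an idempotent of trace `f (d * c)`.
lemma hitL_eq_zero_of_apply_character_mul_eq_zero [CharZero k] (hf : ∀ x, f (hitL f x) = f x)
    (hC : IsSubcoalgebra k H C) (hD : IsSubcoalgebra k H D)
    (f_character : f (character hD * character hC) = 0) {z : H} (hz : z ∈ D * C) :
    hitL f z = 0 := by
  obtain ⟨r, p, q, hpq⟩ := exists_apply_mul_eq_sum f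
  have tensorHit_eq_zero : tensorHit hC hD p q = 0 :=
    eq_zero_of_isIdempotentElem_of_trace_eq_zero (k := k) (V := D ⊗[k] C)
      (isIdempotentElem_tensorHit hC hD hf hpq) ((trace_tensorHit hC hD hpq).trans f_character)
  induction hz using Submodule.mul_induction_on' with
  | mem_mul_mem x hx y hy =>
    calc hitL f (x * y) = ∑ j, hitL (p j) x * hitL (q j) y := (sum_hitL_mul_hitL hpq x y).symm
      _ = LinearMap.mul' k H (TensorProduct.map D.subtype C.subtype
          (tensorHit hC hD p q (⟨x, hx⟩ ⊗ₜ ⟨y, hy⟩))) := by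
        simp only [map_subtype_tensorHit, map_sum, LinearMap.mul'_apply]
      _ = 0 := by rw [tensorHit_eq_zero, LinearMap.zero_apply, map_zero, map_zero]
  | add x _ y _ hx hy => rw [map_add, hx, hy, add_zero]

end IdempotentFunctional

section Conjugate

variable {k : Type} [Field k] {H : Type} [Ring H] [HopfAlgebra k H] {K : Subalgebra k H} {κ : H}
  {C D : Submodule k H}

local notation "Δ" => Coalgebra.comul (R := k) (A := H)
local notation "ε" => Coalgebra.counit (R := k) (A := H)
local notation "𝖲" => HopfAlgebra.antipode k (A := H)

/-- The left ideal of the elements of `colinearEnd K` which vanish on `C`. -/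
def colinearAnnihilator (K : Subalgebra k H) (C : Submodule k H) : Ideal (colinearEnd K) where
  carrier := {T | ∀ x ∈ C, (T : Module.End k H) x = 0}
  add_mem' hT hU x hx := by simp [hT x hx, hU x hx]
  zero_mem' x _ := by simp
  smul_mem' U T hT x hx := by simp [hT x hx]

lemma hitL_mulRight_eq_zero (hC : IsSubcoalgebra k H C) {g : H →ₗ[k] k}
    (hg : C.map (LinearMap.mulRight k κ) ≤ g.ker) {x : H} (hx : x ∈ C) :
    hitL (g ∘ₗ LinearMap.mulRight k κ) x = 0 := by
  obtain ⟨r, a, b, ha, -, h⟩ := exists_fin_sum_tmul_of_mem (hC x hx)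
  have g_a (j : Fin r) : g (a j * κ) = 0 := hg (Submodule.mem_map_of_mem (ha j))
  simp [hitL_apply, h, g_a]

lemma exists_isIdempotentElem_colinearAnnihilator [IsSemisimpleRing (colinearEnd K)]
    (C : Submodule k H) : ∃ e ∈ colinearAnnihilator K C, IsIdempotentElem e ∧
      ∀ T ∈ colinearAnnihilator K C, T * e = T := by
  obtain ⟨e, e_idem, span_e⟩ :=
    IsSemisimpleRing.ideal_eq_span_idempotent (R := colinearEnd K) (colinearAnnihilator K C)
  refine ⟨e, span_e ▸ Ideal.mem_span_singleton_self e, e_idem, fun T hT => ?_⟩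
  obtain ⟨U, rfl⟩ := Ideal.mem_span_singleton'.1 (span_e ▸ hT)
  rw [mul_assoc, e_idem.eq]

lemma counit_apply_mul_integral (hκ : IsIdempotentIntegral k H K κ) {T : Module.End k H}
    (hT : T ∈ colinearEnd K) (x : H) : ε (T (x * κ)) = ε (T x) := by
  rw [hT.2 x κ hκ.1, Bialgebra.counit_mul, hκ.2.1, mul_one]

variable [FiniteDimensional k H] [CharZero k]

lemma apply_eq_zero_of_mem_colinearAnnihilator (hκ : IsIdempotentIntegral k H K κ)
    (hC : IsSubcoalgebra k H C) (hD : IsSubcoalgebra k H D)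
    (h : ∀ d ∈ D, IsCocomm k H d → ∀ c ∈ C, IsCocomm k H c → d * (c * κ) = ε d • (c * κ))
    {e : colinearEnd K} (e_idem : IsIdempotentElem e) (he : e ∈ colinearAnnihilator K C) {z : H}
    (hz : z ∈ D * C) : (e : Module.End k H) z = 0 := by
  set f : H →ₗ[k] k := ε ∘ₗ (e : Module.End k H)
  set c := character hC
  set d := character hD
  have e_eq : (e : Module.End k H) = hitL f := eq_hitL_of_mem_colinearEnd e.2
  have f_idem (x : H) : f (hitL f x) = f x := by
    rw [← e_eq]
    exact congrArg (fun T : colinearEnd K => ε ((T : Module.End k H) x)) e_idem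
  have f_mul_integral (x : H) : f (x * κ) = f x := counit_apply_mul_integral hκ e.2 x
  have f_c : f c = 0 := by
    rw [LinearMap.comp_apply, he c (character_mem hC), map_zero]
  have f_mul_character : f (d * c) = 0 :=
    calc f (d * c) = f (d * (c * κ)) := by rw [← f_mul_integral, mul_assoc]
      _ = ε d • f (c * κ) := by
        rw [h d (character_mem hD) (isCocomm_character hD) c (character_mem hC)
          (isCocomm_character hC), map_smul]
      _ = 0 := by rw [f_mul_integral, f_c, smul_zero]
  rw [e_eq]
  exact hitL_eq_zero_of_apply_character_mul_eq_zero f_idem hC hD f_mul_character hz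

variable [IsAlgClosed k] [IsSemisimpleRing H]

lemma mul_integral_mem (hK : IsHopfSubalgebra k H K) (hκ : IsIdempotentIntegral k H K κ)
    (hC : IsSubcoalgebra k H C) (hD : IsSubcoalgebra k H D)
    (h : ∀ d ∈ D, IsCocomm k H d → ∀ c ∈ C, IsCocomm k H c → d * (c * κ) = ε d • (c * κ))
    {z : H} (hz : z ∈ D * C) : z * κ ∈ C.map (LinearMap.mulRight k κ) := by
  have := isSemisimpleRing_colinearEnd hK hκ
  obtain ⟨e, he, e_idem, mul_e⟩ := exists_isIdempotentElem_colinearAnnihilator (K := K) C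
  by_contra zκ_notMem
  obtain ⟨g, hg, le_ker_g⟩ := Submodule.exists_le_ker_of_notMem zκ_notMem
  let U : colinearEnd K := ⟨_, hitL_mulRight_mem_colinearEnd hK hκ g⟩
  have hU : U ∈ colinearAnnihilator K C := fun x hx => hitL_mulRight_eq_zero hC le_ker_g hx
  have U_z : (U : Module.End k H) z = 0 := by
    rw [← mul_e U hU, MulMemClass.coe_mul, Module.End.mul_apply,
      apply_eq_zero_of_mem_colinearAnnihilator hκ hC hD h e_idem he hz, map_zero]
  refine hg ?_
  calc g (z * κ) = ε ((U : Module.End k H) z) :=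
        (counit_hitL (g ∘ₗ LinearMap.mulRight k κ) z).symm
    _ = 0 := by rw [U_z, map_zero]

lemma mul_le_CKsub (hK : IsHopfSubalgebra k H K) (hκ : IsIdempotentIntegral k H K κ)
    (hC : IsSubcoalgebra k H C) (hD : IsSubcoalgebra k H D)
    (h : ∀ d ∈ D, IsCocomm k H d → ∀ c ∈ C, IsCocomm k H c → d * (c * κ) = ε d • (c * κ)) :
    D * C ≤ CKsub k H K C := by
  intro y hy
  obtain ⟨f, hf⟩ := exists_hitL_integral_eq_one hK hκ
  obtain ⟨r, a, b, -, hb, hab⟩ := exists_fin_sum_tmul_of_mem (hD.mul hC y hy)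
  have y_eq : y = ∑ j, hitL (f ∘ₗ LinearMap.mulLeft k (𝖲 (a j))) (b j * κ) := by
    have contract := congrArg (contractLeft f) (one_tmul_mul_comul hab κ)
    rw [contractLeft_tmul_mul, LinearMap.mulLeft_one, LinearMap.comp_id, ← hitL_apply, hf,
      mul_one, map_sum] at contract
    simpa only [contractLeft_tmul_mul, one_mul, ← hitL_apply] using contract
  rw [y_eq]
  refine Submodule.sum_mem _ fun j _ => hitL_mem (hC.mul hK.1) _ ?_
  obtain ⟨c, hc, hcκ⟩ := mul_integral_mem hK hκ hC hD h (hb j)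
  rw [← hcκ]
  exact Submodule.mul_mem_mul hc hκ.1

lemma conjK_mul_mem (hK : IsHopfSubalgebra k H K) (hκ : IsIdempotentIntegral k H K κ)
    (hC : IsSubcoalgebra k H C) {a x : H} (ha : a ∈ conjK k H K κ C) (hx : x ∈ CKsub k H K C) :
    a * x ∈ CKsub k H K C := by
  suffices conjK k H K κ C ≤ (CKsub k H K C).comap (LinearMap.mulRight k x) from this ha
  refine sSup_le fun D hD d hd => ?_
  have mul_CKsub_le : D * CKsub k H K C ≤ CKsub k H K C :=
    calc D * CKsub k H K C = D * C * K.toSubmodule := (mul_assoc _ _ _).symm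
      _ ≤ CKsub k H K C * K.toSubmodule :=
        mul_le_mul_left (mul_le_CKsub hK hκ hC hD.1.1 hD.2) _
      _ = CKsub k H K C := by
        rw [CKsub, mul_assoc, K.isIdempotentElem_toSubmodule.eq]
  exact mul_CKsub_le (Submodule.mul_mem_mul hd hx)

end Conjugate

/-! ### Diagonal actions on tensor products -/

section AntipodeInv

open HopfAlgebra TensorProduct

variable {k H : Type*} [CommSemiring k] [Semiring H] [HopfAlgebra k H]

local notation "Δ" => Coalgebra.comul (R := k) (A := H)
local notation "ε" => Coalgebra.counit (R := k) (A := H)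
local notation "𝖲" => HopfAlgebra.antipode k (A := H)

/-- The inverse of a bijective antipode. -/
def antipodeInv (hS : Function.Bijective 𝖲) : H →ₗ[k] H :=
  (LinearEquiv.ofBijective 𝖲 hS).symm

@[simp] lemma antipode_antipodeInv (hS : Function.Bijective 𝖲) (x : H) : 𝖲 (antipodeInv hS x) = x :=
  (LinearEquiv.ofBijective 𝖲 hS).apply_symm_apply x

@[simp] lemma antipodeInv_antipode (hS : Function.Bijective 𝖲) (x : H) : antipodeInv hS (𝖲 x) = x :=
  (LinearEquiv.ofBijective 𝖲 hS).symm_apply_apply x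

@[simp] lemma antipodeInv_one (hS : Function.Bijective 𝖲) : antipodeInv hS 1 = 1 := by
  simpa using antipodeInv_antipode hS 1

lemma antipodeInv_mul (hS : Function.Bijective 𝖲) (x y : H) :
    antipodeInv hS (x * y) = antipodeInv hS y * antipodeInv hS x :=
  hS.1 (by simp only [antipode_mul_antidistrib, antipode_antipodeInv])

variable {r : ℕ} {x : H} {a b : Fin r → H}

lemma sum_mul_antipodeInv (hS : Function.Bijective 𝖲) (h : Δ x = ∑ j, a j ⊗ₜ[k] b j) :
    ∑ j, b j * antipodeInv hS (a j) = ε x • 1 :=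
  hS.1 (by simp [antipode_mul_antidistrib, sum_mul_antipode h])

lemma sum_antipodeInv_mul (hS : Function.Bijective 𝖲) (h : Δ x = ∑ j, a j ⊗ₜ[k] b j) :
    ∑ j, antipodeInv hS (b j) * a j = ε x • 1 :=
  hS.1 (by simp [antipode_mul_antidistrib, sum_antipode_mul h])

lemma sum_comul_mul_antipodeInv_tmul (hS : Function.Bijective 𝖲) (h : Δ x = ∑ j, a j ⊗ₜ[k] b j) :
    ∑ j, Δ (b j) * (antipodeInv hS (a j) ⊗ₜ[k] (1 : H)) = 1 ⊗ₜ x := by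
  let G : H ⊗[k] (H ⊗[k] H) →ₗ[k] H ⊗[k] H :=
    map (LinearMap.mul' k H ∘ₗ (TensorProduct.comm k H H).toLinearMap ∘ₗ
      map (antipodeInv hS) LinearMap.id) LinearMap.id ∘ₗ (TensorProduct.assoc k H H H).symm
  have G_tmul (u : H) (s : H ⊗[k] H) : G (u ⊗ₜ s) = s * (antipodeInv hS u ⊗ₜ 1) := by
    induction s with
    | zero => simp
    | tmul y z => simp [G]
    | add y z hy hz => simp only [tmul_add, map_add, hy, hz, add_mul]
  have G_assoc (y z : H) : G (TensorProduct.assoc k H H H (Δ y ⊗ₜ z)) = 1 ⊗ₜ (ε y • z) := by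
    obtain ⟨m, c, d, hcd⟩ := exists_fin_sum_tmul (Δ y)
    simp [G, hcd, sum_mul_antipodeInv hS hcd, smul_tmul]
  calc _ = ∑ j, G (a j ⊗ₜ Δ (b j)) := by simp only [G_tmul]
    _ = ∑ j, (1 : H) ⊗ₜ (ε (a j) • b j) := by simp only [sum_coassoc h, G_assoc]
    _ = 1 ⊗ₜ x := by rw [← tmul_sum, sum_counit_smul_right h]

lemma sum_map_antipodeInv_comul_mul_tmul (hS : Function.Bijective 𝖲)
    (h : Δ x = ∑ j, a j ⊗ₜ[k] b j) :
    ∑ j, map (antipodeInv hS) LinearMap.id (Δ (b j)) * (a j ⊗ₜ[k] (1 : H)) = 1 ⊗ₜ x := by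
  let G : H ⊗[k] (H ⊗[k] H) →ₗ[k] H ⊗[k] H :=
    map (LinearMap.mul' k H ∘ₗ (TensorProduct.comm k H H).toLinearMap ∘ₗ
      map LinearMap.id (antipodeInv hS)) LinearMap.id ∘ₗ (TensorProduct.assoc k H H H).symm
  have G_tmul (u : H) (s : H ⊗[k] H) :
      G (u ⊗ₜ s) = map (antipodeInv hS) LinearMap.id s * (u ⊗ₜ 1) := by
    induction s with
    | zero => simp
    | tmul y z => simp [G]
    | add y z hy hz => simp only [tmul_add, map_add, hy, hz, add_mul]
  have G_assoc (y z : H) : G (TensorProduct.assoc k H H H (Δ y ⊗ₜ z)) = 1 ⊗ₜ (ε y • z) := by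
    obtain ⟨m, c, d, hcd⟩ := exists_fin_sum_tmul (Δ y)
    simp [G, hcd, sum_antipodeInv_mul hS hcd, smul_tmul]
  calc _ = ∑ j, G (a j ⊗ₜ Δ (b j)) := by simp only [G_tmul]
    _ = ∑ j, (1 : H) ⊗ₜ (ε (a j) • b j) := by simp only [sum_coassoc h, G_assoc]
    _ = 1 ⊗ₜ x := by rw [← tmul_sum, sum_counit_smul_right h]

lemma sum_map_antipode_comul_mul_tmul (h : Δ x = ∑ j, a j ⊗ₜ[k] b j) :
    ∑ j, map LinearMap.id 𝖲 (Δ (a j)) * ((1 : H) ⊗ₜ[k] b j) = x ⊗ₜ 1 := by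
  let G : H ⊗[k] (H ⊗[k] H) →ₗ[k] H ⊗[k] H :=
    map LinearMap.id (LinearMap.mul' k H ∘ₗ map 𝖲 LinearMap.id)
  have G_assoc (s : H ⊗[k] H) (u : H) :
      G (TensorProduct.assoc k H H H (s ⊗ₜ u)) = map LinearMap.id 𝖲 s * (1 ⊗ₜ u) := by
    induction s with
    | zero => simp
    | tmul y z => simp [G]
    | add y z hy hz => simp only [add_tmul, map_add, hy, hz, add_mul]
  have G_tmul (y z : H) : G (y ⊗ₜ Δ z) = (ε z • y) ⊗ₜ 1 := by
    obtain ⟨m, c, d, hcd⟩ := exists_fin_sum_tmul (Δ z)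
    simp [G, hcd, sum_antipode_mul hcd, smul_tmul]
  calc _ = ∑ j, G (a j ⊗ₜ Δ (b j)) := by simp only [sum_coassoc h, G_assoc]
    _ = ∑ j, (ε (b j) • a j) ⊗ₜ (1 : H) := by simp only [G_tmul]
    _ = x ⊗ₜ 1 := by rw [← sum_tmul, sum_counit_smul_left h]

end AntipodeInv

section Diagonal

variable {k H : Type*} [CommSemiring k] [Semiring H] [HopfAlgebra k H]

local notation "Δ" => Coalgebra.comul (R := k) (A := H)
local notation "𝖲" => HopfAlgebra.antipode k (A := H)

variable {U W X : Type*} [AddCommMonoid U] [Module k U] [Module H U] [IsScalarTower k H U]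
  [AddCommMonoid W] [Module k W] [Module H W] [IsScalarTower k H W]
  [AddCommMonoid X] [Module k X] [Module H X]

variable (k H U W) in
/-- The action of `H ⊗ H` on the tensor product of two `H`-modules. -/
def outerHom : H ⊗[k] H →ₐ[k] Module.End k (U ⊗[k] W) :=
  (Module.endTensorEndAlgHom (R := k) (A := k) (S := k)).comp
    (Algebra.TensorProduct.map (Algebra.lsmul k k U) (Algebra.lsmul k k W))

@[simp] lemma outerHom_tmul (x y : H) (u : U) (w : W) :
    outerHom k H U W (x ⊗ₜ y) (u ⊗ₜ w) = (x • u) ⊗ₜ (y • w) :=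
  rfl

variable (k H U W) in
/-- The diagonal action of `H` on the tensor product of two `H`-modules. -/
def diagHom : H →ₐ[k] Module.End k (U ⊗[k] W) :=
  (outerHom k H U W).comp (Bialgebra.comulAlgHom k H)

lemma diagHom_apply (h : H) : diagHom k H U W h = outerHom k H U W (Δ h) := rfl

lemma diagHom_tmul {r : ℕ} {h : H} {a b : Fin r → H} (hab : Δ h = ∑ j, a j ⊗ₜ[k] b j) (u : U)
    (w : W) : diagHom k H U W h (u ⊗ₜ w) = ∑ j, (a j • u) ⊗ₜ[k] (b j • w) := by
  simp [diagHom_apply, hab]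

lemma tmul_smul_eq_sum_diagHom (hS : Function.Bijective 𝖲) {r : ℕ} {h : H} {a b : Fin r → H}
    (hab : Δ h = ∑ j, a j ⊗ₜ[k] b j) (u : U) (w : W) :
    u ⊗ₜ (h • w) = ∑ j, diagHom k H U W (b j) ((antipodeInv hS (a j) • u) ⊗ₜ w) := by
  have := LinearMap.congr_fun
    (congrArg (outerHom k H U W) (sum_comul_mul_antipodeInv_tmul hS hab)) (u ⊗ₜ w)
  simpa [diagHom_apply] using this.symm

lemma smul_tmul_eq_sum_diagHom {r : ℕ} {h : H} {a b : Fin r → H}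
    (hab : Δ h = ∑ j, a j ⊗ₜ[k] b j) (u : U) (w : W) :
    (h • u) ⊗ₜ w = ∑ j, diagHom k H U W (a j) (u ⊗ₜ (𝖲 (b j) • w)) := by
  have := LinearMap.congr_fun
    (congrArg (outerHom k H U W) (sum_comul_mul_tmul_antipode hab)) (u ⊗ₜ w)
  simpa [diagHom_apply] using this.symm

lemma exists_linearEquiv_of_bijective {Ψ : X →ₗ[k] U ⊗[k] W} (hΨ : Function.Bijective Ψ)
    (Ψ_smul : ∀ h z, Ψ (h • z) = diagHom k H U W h (Ψ z)) :
    ∃ φ : (U ⊗[k] W) ≃ₗ[k] X, ∀ (h : H) (u : U) (w : W) (r : ℕ) (a b : Fin r → H),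
      Δ h = ∑ j, a j ⊗ₜ[k] b j →
        φ (∑ j, (a j • u) ⊗ₜ[k] (b j • w)) = h • φ (u ⊗ₜ[k] w) := by
  let e := LinearEquiv.ofBijective Ψ hΨ
  have Ψ_symm z : Ψ (e.symm z) = z := e.apply_symm_apply z
  refine ⟨e.symm, fun h u w r a b hab => ?_⟩
  rw [← diagHom_tmul hab, LinearEquiv.symm_apply_eq, LinearEquiv.ofBijective_apply, Ψ_smul, Ψ_symm]

variable [IsScalarTower k H X]

variable (U X) in
/-- The action of `H ⊗ H` on `Hom(U, X)` given by `(x ⊗ y) f = y f(S⁻¹(x) · )`; through the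
comultiplication it makes `Hom(U, X)` the right adjoint of the diagonal tensor product `U ⊗ -`. -/
def homPairAction (hS : Function.Bijective 𝖲) : H ⊗[k] H →ₐ[k] Module.End k (U →ₗ[k] X) :=
  Algebra.TensorProduct.lift
    (AlgHom.ofLinearMap
      ((LinearMap.llcomp k U U X).flip ∘ₗ (Algebra.lsmul k k U).toLinearMap ∘ₗ antipodeInv hS)
      (by ext; simp) (fun x y => by ext; simp [antipodeInv_mul]))
    (Algebra.lsmul k k (U →ₗ[k] X)) (fun x y => (commute_iff_eq _ _).2 (by ext; simp))

@[simp] lemma homPairAction_tmul (hS : Function.Bijective 𝖲) (x y : H) (f : U →ₗ[k] X) (u : U) :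
    homPairAction U X hS (x ⊗ₜ y) f u = y • f (antipodeInv hS x • u) := by
  simp [homPairAction]

lemma lift_flip_diagHom (hS : Function.Bijective 𝖲) {Φ : W →ₗ[k] U →ₗ[k] X}
    (hΦ : ∀ h w, Φ (h • w) = homPairAction U X hS (Δ h) (Φ w)) (h : H) (z : U ⊗[k] W) :
    TensorProduct.lift Φ.flip (diagHom k H U W h z) = h • TensorProduct.lift Φ.flip z := by
  induction z with
  | zero => simp
  | add y z hy hz => simp only [map_add, hy, hz, smul_add]
  | tmul u w =>
    let E : H ⊗[k] H →ₗ[k] X := TensorProduct.lift (LinearMap.mk₂ k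
      (fun x y => y • Φ w (x • u)) (by intros; simp [add_smul])
      (by intros; rw [smul_assoc, map_smul, smul_comm])
      (by intros; simp [add_smul]) (by intros; simp))
    have E_mul (s : H ⊗[k] H) (x : H) :
        E (map (antipodeInv hS) LinearMap.id s * (x ⊗ₜ 1)) =
          homPairAction U X hS s (Φ w) (x • u) := by
      induction s with
      | zero => simp
      | tmul y z => simp [E, mul_smul]
      | add y z hy hz => simp only [map_add, add_mul, hy, hz, LinearMap.add_apply]
    obtain ⟨r, a, b, hab⟩ := exists_fin_sum_tmul (Δ h)
    have := congrArg E (sum_map_antipodeInv_comul_mul_tmul hS hab)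
    simpa [E_mul, ← hΦ, E, diagHom_tmul hab] using this

end Diagonal

/-! ### Maps out of induced modules -/

section FreeLift

variable {k H Y V : Type*}

section Semiring

variable [CommSemiring k] [Semiring H] [Algebra k H] [AddCommMonoid Y] [Module k Y]
  [AddCommMonoid V] [Module k V]

/-- The map `H ⊗ Y → V`, `h ⊗ y ↦ ρ(h) β(y)`, by which a linear map `β` extends to the free
`H`-module on `Y`. -/
def freeLift (ρ : H →ₐ[k] Module.End k V) (β : Y →ₗ[k] V) : H ⊗[k] Y →ₗ[k] V :=
  TensorProduct.lift (β.lcomp k V ∘ₗ ρ.toLinearMap)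

@[simp] lemma freeLift_tmul (ρ : H →ₐ[k] Module.End k V) (β : Y →ₗ[k] V) (h : H) (y : Y) :
    freeLift ρ β (h ⊗ₜ y) = ρ h (β y) := rfl

lemma freeLift_smul (ρ : H →ₐ[k] Module.End k V) (β : Y →ₗ[k] V) (h : H) (z : H ⊗[k] Y) :
    freeLift ρ β (h • z) = ρ h (freeLift ρ β z) := by
  induction z with
  | zero => simp
  | tmul g y => simp [TensorProduct.smul_tmul']
  | add x y hx hy => simp only [smul_add, map_add, hx, hy]

end Semiring

variable [CommRing k] [Ring H] [Algebra k H] [AddCommGroup Y] [Module k Y] [AddCommGroup V]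
  [Module k V]

lemma exists_lift_of_forall_freeLift_eq_zero (ρ : H →ₐ[k] Module.End k V) (β : Y →ₗ[k] V)
    {s : Set (H ⊗[k] Y)} {R : Submodule H (H ⊗[k] Y)} (hR : R = Submodule.span H s)
    (hs : ∀ z ∈ s, freeLift ρ β z = 0) :
    ∃ Ψ : ((H ⊗[k] Y) ⧸ R) →ₗ[k] V,
      (∀ y, Ψ (Submodule.Quotient.mk (1 ⊗ₜ y)) = β y) ∧ ∀ h q, Ψ (h • q) = ρ h (Ψ q) := by
  have R_le_ker : R.restrictScalars k ≤ LinearMap.ker (freeLift ρ β) := by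
    subst hR
    intro z hz
    rw [Submodule.restrictScalars_mem] at hz
    induction hz using Submodule.span_induction with
    | mem z hz => exact hs z hz
    | zero => exact Submodule.zero_mem _
    | add x y _ _ hx hy => exact Submodule.add_mem _ hx hy
    | smul h x _ hx => rw [LinearMap.mem_ker, freeLift_smul, LinearMap.mem_ker.1 hx, map_zero]
  let Ψ : ((H ⊗[k] Y) ⧸ R) →ₗ[k] V := (R.restrictScalars k).liftQ (freeLift ρ β) R_le_ker ∘ₗ
    (Submodule.Quotient.restrictScalarsEquiv k R).symm.toLinearMap
  have Ψ_mk (z : H ⊗[k] Y) : Ψ (Submodule.Quotient.mk z) = freeLift ρ β z := rfl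
  refine ⟨Ψ, fun y => by simp [Ψ_mk], fun h q => ?_⟩
  induction q using Submodule.Quotient.induction_on with
  | H z => rw [← Submodule.Quotient.mk_smul, Ψ_mk, Ψ_mk, freeLift_smul]

end FreeLift

section Induced

variable {k : Type} [Field k] {H : Type} [Ring H] [HopfAlgebra k H]

local notation "Δ" => Coalgebra.comul (R := k) (A := H)
local notation "𝖲" => HopfAlgebra.antipode k (A := H)

universe v

variable {L : Subalgebra k H} {N : Type v} [AddCommGroup N] [Module k N] [Module L N]

variable (L) in
/-- A linear map `H → End(N)` extending the action of a subalgebra `L` on the `L`-module `N`.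
It allows the legs of `Δ(l) ∈ L ⊗ L` to act on `N` without being lifted to `L`. -/
def ExtendsAction (act : H →ₗ[k] Module.End k N) : Prop :=
  ∀ (l : L) (n : N), act l n = l • n

lemma exists_extendsAction [IsScalarTower k L N] :
    ∃ act : H →ₗ[k] Module.End k N, ExtendsAction L act := by
  obtain ⟨e, he⟩ := L.val.toLinearMap.exists_leftInverse_of_injective
    (LinearMap.ker_eq_bot.2 Subtype.val_injective)
  refine ⟨(Algebra.lsmul k k N).toLinearMap ∘ₗ e, fun l n => ?_⟩
  exact congrArg (· • n) (LinearMap.congr_fun he l)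

namespace ExtendsAction

variable {act : H →ₗ[k] Module.End k N}

lemma apply_of_mem (hact : ExtendsAction L act) {l : H} (hl : l ∈ L) (n : N) :
    act l n = (⟨l, hl⟩ : L) • n :=
  hact ⟨l, hl⟩ n

lemma map_one (hact : ExtendsAction L act) : act 1 = 1 :=
  LinearMap.ext fun n => (hact 1 n).trans (one_smul L n)

lemma map_mul (hact : ExtendsAction L act) {l l' : H} (hl : l ∈ L) (hl' : l' ∈ L) :
    act (l * l') = act l * act l' :=
  LinearMap.ext fun n => by
    rw [Module.End.mul_apply, hact.apply_of_mem hl', hact.apply_of_mem hl, ← mul_smul]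
    exact hact.apply_of_mem (mul_mem hl hl') n

end ExtendsAction

lemma mk_tmul_eq_mk_one_tmul (a : L) (n : N) :
    (Submodule.Quotient.mk ((a : H) ⊗ₜ[k] n) : Ind k H L N) =
      Submodule.Quotient.mk ((1 : H) ⊗ₜ[k] (a • n)) :=
  (Submodule.Quotient.eq _).2 (Submodule.subset_span ⟨a, n, rfl⟩)

@[simp] lemma smul_mk_tmul {Y : Type*} [AddCommGroup Y] [Module k Y]
    (R : Submodule H (H ⊗[k] Y)) (g h : H) (y : Y) :
    g • (Submodule.Quotient.mk (h ⊗ₜ[k] y) : (H ⊗[k] Y) ⧸ R) =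
      Submodule.Quotient.mk ((g * h) ⊗ₜ[k] y) :=
  rfl

variable {U X : Type*} [AddCommMonoid U] [Module k U] [Module H U] [IsScalarTower k H U]
  [AddCommMonoid X] [Module k X]

/-- The map `x ⊗ y ↦ θ(x u, y n)` on `H ⊗ H` determined by a pairing `θ` on `U × N`. -/
def pairOrbit (act : H →ₗ[k] Module.End k N) (θ : U →ₗ[k] N →ₗ[k] X) (u : U) (n : N) :
    H ⊗[k] H →ₗ[k] X :=
  TensorProduct.lift θ ∘ₗ
    map ((LinearMap.toSpanSingleton H U u).restrictScalars k) (act.flip n)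

@[simp] lemma pairOrbit_tmul (act : H →ₗ[k] Module.End k N) (θ : U →ₗ[k] N →ₗ[k] X) (u : U)
    (n : N) (x y : H) : pairOrbit act θ u n (x ⊗ₜ y) = θ (x • u) (act y n) :=
  rfl

lemma pairOrbit_mul_tmul_one (act : H →ₗ[k] Module.End k N) (θ : U →ₗ[k] N →ₗ[k] X) (u : U)
    (n : N) (t : H ⊗[k] H) (x : H) :
    pairOrbit act θ u n (t * (x ⊗ₜ 1)) = pairOrbit act θ (x • u) n t := by
  induction t with
  | zero => simp
  | tmul y z => simp [mul_smul]
  | add y z hy hz => simp only [add_mul, map_add, hy, hz]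

variable [Module H X] [IsScalarTower k H X]

variable (L) in
/-- A pairing `θ : U × N → X` is equivariant under a subalgebra `L` if
`∑ θ(l₁ u, l₂ n) = l θ(u, n)` for all `l ∈ L`. -/
def IsEquivariantPairing (act : H →ₗ[k] Module.End k N) (θ : U →ₗ[k] N →ₗ[k] X) : Prop :=
  ∀ l ∈ L, ∀ u n, pairOrbit act θ u n (Δ l) = l • θ u n

lemma IsEquivariantPairing.homPairAction_flip (hL : IsHopfSubalgebra k H L)
    (hS : Function.Bijective 𝖲) {act : H →ₗ[k] Module.End k N} (hact : ExtendsAction L act)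
    {θ : U →ₗ[k] N →ₗ[k] X} (hθ : IsEquivariantPairing L act θ) (l : L) (n : N) :
    homPairAction U X hS (Δ (l : H)) (θ.flip n) = θ.flip (l • n) := by
  obtain ⟨r, a, b, -, hb, hab⟩ := exists_fin_sum_tmul_of_mem (hL.1 l l.2)
  ext u
  have := congrArg (pairOrbit act θ u n) (sum_comul_mul_antipodeInv_tmul hS hab)
  simpa [hab, pairOrbit_mul_tmul_one, hθ _ (hb _), hact l] using this

lemma exists_lift_tensor_ind (hL : IsHopfSubalgebra k H L) (hS : Function.Bijective 𝖲)
    {act : H →ₗ[k] Module.End k N} (hact : ExtendsAction L act) {θ : U →ₗ[k] N →ₗ[k] X}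
    (hθ : IsEquivariantPairing L act θ) :
    ∃ Φ : U ⊗[k] Ind k H L N →ₗ[k] X,
      (∀ u n, Φ (u ⊗ₜ Submodule.Quotient.mk (1 ⊗ₜ n)) = θ u n) ∧
      ∀ h z, Φ (diagHom k H U (Ind k H L N) h z) = h • Φ z := by
  let : AddCommGroup X := Module.addCommMonoidToAddCommGroup k
  obtain ⟨Φ, Φ_mk, Φ_smul⟩ := exists_lift_of_forall_freeLift_eq_zero
    ((homPairAction U X hS).comp (Bialgebra.comulAlgHom k H)) θ.flip
    (R := indRel k H L N) rfl (by
      rintro _ ⟨l, n, rfl⟩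
      rw [map_sub, freeLift_tmul, freeLift_tmul, _root_.map_one, sub_eq_zero]
      exact hθ.homPairAction_flip hL hS hact l n)
  refine ⟨TensorProduct.lift Φ.flip, fun u n => ?_, lift_flip_diagHom hS Φ_smul⟩
  exact LinearMap.congr_fun (Φ_mk n) u

lemma mem_of_forall_tmul_mk_one_tmul_mem (hS : Function.Bijective 𝖲)
    {P : Submodule k (U ⊗[k] Ind k H L N)}
    (smul_mem : ∀ h, ∀ z ∈ P, diagHom k H U (Ind k H L N) h z ∈ P)
    (tmul_mem : ∀ u n, u ⊗ₜ Submodule.Quotient.mk (1 ⊗ₜ n) ∈ P) (z : U ⊗[k] Ind k H L N) :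
    z ∈ P := by
  induction z with
  | zero => exact P.zero_mem
  | add y z hy hz => exact P.add_mem hy hz
  | tmul u w =>
    induction w using Submodule.Quotient.induction_on with
    | H w =>
      induction w with
      | zero => simp
      | add y z hy hz => simpa only [Submodule.Quotient.mk_add, TensorProduct.tmul_add]
          using P.add_mem hy hz
      | tmul h n =>
        obtain ⟨r, a, b, hab⟩ := exists_fin_sum_tmul (Δ h)
        rw [← mul_one h, ← smul_mk_tmul, tmul_smul_eq_sum_diagHom hS hab]
        exact P.sum_mem fun j _ => smul_mem _ _ (tmul_mem _ _)

end Induced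

/-! ### Twisted pairings -/

section Twist

variable {k : Type} [Field k] {H : Type} [Ring H] [HopfAlgebra k H]

local notation "Δ" => Coalgebra.comul (R := k) (A := H)
local notation "𝖲" => HopfAlgebra.antipode k (A := H)

universe v

variable {N : Type v} [AddCommGroup N] [Module k N]
  {Y T : Type*} [AddCommMonoid Y] [Module k Y] [AddCommGroup T] [Module k T] [Module H T]
  [IsScalarTower k H T]

/-- The map `(l, y, n) ↦ ∑ l₁ τ(y, S(l₂) n)`, which extends a pairing `τ` on `Y × N` to an
equivariant pairing on `(L ⊗ Y) × N`. -/
def twist (act : H →ₗ[k] Module.End k N) (τ : Y →ₗ[k] N →ₗ[k] T) : H →ₗ[k] Y →ₗ[k] N →ₗ[k] T :=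
  TensorProduct.lift (LinearMap.mk₂ k (fun x y => x • (τ.compl₂ (act (𝖲 y))))
    (by intros; ext; simp [add_smul]) (by intros; ext; simp)
    (by intros; ext; simp) (by intros; ext; simpa using smul_comm _ _ _)) ∘ₗ Δ

lemma twist_apply (act : H →ₗ[k] Module.End k N) (τ : Y →ₗ[k] N →ₗ[k] T) {r : ℕ} {l : H}
    {a b : Fin r → H} (hab : Δ l = ∑ j, a j ⊗ₜ[k] b j) (y : Y) (n : N) :
    twist act τ l y n = ∑ j, a j • τ y (act (𝖲 (b j)) n) := by
  simp [twist, hab, LinearMap.sum_apply]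

variable {L : Subalgebra k H} [Module L N] {act : H →ₗ[k] Module.End k N}

lemma twist_one (hact : ExtendsAction L act) (τ : Y →ₗ[k] N →ₗ[k] T) (y : Y) (n : N) :
    twist act τ 1 y n = τ y n := by
  rw [twist_apply act τ (r := 1) (a := 1) (b := 1) (by simp [Algebra.TensorProduct.one_def])]
  simp [hact.map_one]

lemma twist_mul (hL : IsHopfSubalgebra k H L) (hact : ExtendsAction L act)
    (τ : Y →ₗ[k] N →ₗ[k] T) {r : ℕ} {l g : H} {a b : Fin r → H} (hb : ∀ j, b j ∈ L)
    (hab : Δ l = ∑ j, a j ⊗ₜ[k] b j) (hg : g ∈ L) (y : Y) (n : N) :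
    twist act τ (l * g) y n = ∑ j, a j • twist act τ g y (act (𝖲 (b j)) n) := by
  obtain ⟨s, c, d, -, hd, hcd⟩ := exists_fin_sum_tmul_of_mem (hL.1 g hg)
  have act_antipode_mul (j : Fin r) (i : Fin s) :
      act (𝖲 (b j * d i)) = act (𝖲 (d i)) * act (𝖲 (b j)) := by
    rw [HopfAlgebra.antipode_mul_antidistrib,
      hact.map_mul (hL.2 _ (hd i)) (hL.2 _ (hb j))]
  have comul_mul : Δ (l * g) = ∑ p : Fin r × Fin s, (a p.1 * c p.2) ⊗ₜ[k] (b p.1 * d p.2) := by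
    simp only [Bialgebra.comul_mul, hab, hcd, Finset.sum_mul_sum, Fintype.sum_prod_type,
      Algebra.TensorProduct.tmul_mul_tmul]
  simp only [twist, LinearMap.comp_apply, comul_mul, map_sum, LinearMap.sum_apply, hcd,
    Finset.smul_sum, Fintype.sum_prod_type]
  simp [act_antipode_mul, mul_smul]

lemma sum_twist_mul (hL : IsHopfSubalgebra k H L) (hact : ExtendsAction L act)
    (τ : Y →ₗ[k] N →ₗ[k] T) {r : ℕ} {l g : H} {a b : Fin r → H} (ha : ∀ j, a j ∈ L)
    (hb : ∀ j, b j ∈ L) (hab : Δ l = ∑ j, a j ⊗ₜ[k] b j) (hg : g ∈ L) (y : Y) (n : N) :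
    ∑ j, twist act τ (a j * g) y (act (b j) n) = l • twist act τ g y n := by
  let E : H ⊗[k] H →ₗ[k] T := TensorProduct.lift (LinearMap.mk₂ k
    (fun p q => p • twist act τ g y (act q n)) (by intros; simp [add_smul]) (by intros; simp)
    (by intros; simp) (by intros; simpa using smul_comm _ _ _))
  have E_mul (p q : H) (hp : p ∈ L) (hq : q ∈ L) :
      E (map LinearMap.id 𝖲 (Δ p) * (1 ⊗ₜ q)) = twist act τ (p * g) y (act q n) := by
    obtain ⟨s, c, d, -, hd, hcd⟩ := exists_fin_sum_tmul_of_mem (hL.1 p hp)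
    rw [twist_mul hL hact τ hd hcd hg]
    simp [E, Finset.sum_mul, hcd, hact.map_mul (hL.2 _ (hd _)) hq]
  calc _ = ∑ j, E (map LinearMap.id 𝖲 (Δ (a j)) * (1 ⊗ₜ b j)) :=
        Finset.sum_congr rfl fun j _ => (E_mul _ _ (ha j) (hb j)).symm
    _ = E (l ⊗ₜ 1) := by rw [← map_sum, sum_map_antipode_comul_mul_tmul hab]
    _ = l • twist act τ g y n := by simp [E, hact.map_one]

end Twist

/-! ### The components of the two Mackey decompositions -/

section Components

variable {k : Type} [Field k] {H : Type} [Ring H] [HopfAlgebra k H]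

local notation "Δ" => Coalgebra.comul (R := k) (A := H)
local notation "𝖲" => HopfAlgebra.antipode k (A := H)

universe v

variable {L K : Subalgebra k H} {Λ : H} {C : Submodule k H}
  {M : Type v} [AddCommGroup M] [Module k M] {N : Type v} [AddCommGroup N] [Module k N] [Module L N]

lemma mem_of_forall_ckmk_mem {P : Submodule k (CKM k H K M C)}
    (hP : ∀ x m, ckmk k H K M C x m ∈ P) (w : CKM k H K M C) : w ∈ P := by
  induction w using TensorProduct.induction_on with
  | zero => exact P.zero_mem
  | tmul x m => exact hP x m
  | add y z hy hz => exact P.add_mem hy hz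

lemma mem_of_forall_ckmnk_mem {P : Submodule k (CKMN k H L K C M N)}
    (hP : ∀ w n, ckmnk k H L K C M N w n ∈ P) (z : CKMN k H L K C M N) : z ∈ P := by
  induction z using TensorProduct.induction_on with
  | zero => exact P.zero_mem
  | tmul w n => exact hP w n
  | add y z hy hz => exact P.add_mem hy hz

variable [Module K M]

lemma mem_of_forall_mk_lcmk_mem {P : Submodule k (Comp k H L K Λ C M)}
    (hP : ∀ l x m, Submodule.Quotient.mk (lcmk k H L K C M l (ckmk k H K M C x m)) ∈ P)
    (q : Comp k H L K Λ C M) : q ∈ P := by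
  induction q using Submodule.Quotient.induction_on with
  | H z =>
    induction z using TensorProduct.induction_on with
    | zero => exact P.zero_mem
    | add y z hy hz => exact P.add_mem hy hz
    | tmul l w =>
      exact mem_of_forall_ckmk_mem (P := P.comap ((compRel k H L K Λ C M).mkQ ∘ₗ
        TensorProduct.mk k L (CKM k H K M C) l)) (hP l) w

variable [IsScalarTower k K M] [IsScalarTower k L N]

variable (L K Λ C M N) in
/-- The pairing `ᶜM × N → (ᶜM ⊗ N)↑^H`, `(w, n) ↦ 1 ⊗ (w ⊗ n)`, on representatives of `ᶜM` in
`CK ⊗_k M`. -/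
def tpPair : CKM k H K M C →ₗ[k] N →ₗ[k] TPInd k H L K Λ C M N :=
  (TensorProduct.mk k (CKM k H K M C) N).compr₂ ((tpRel k H L K Λ C M N).mkQ.restrictScalars k ∘ₗ
    TensorProduct.mk k H (CKMN k H L K C M N) 1)

lemma smul_tpPair (h : H) (w : CKM k H K M C) (n : N) :
    h • tpPair L K Λ C M N w n = Submodule.Quotient.mk (h ⊗ₜ ckmnk k H L K C M N w n) :=
  congrArg (fun g => Submodule.Quotient.mk (g ⊗ₜ ckmnk k H L K C M N w n)) (mul_one h)

lemma mem_of_forall_smul_tpPair_mem {P : Submodule k (TPInd k H L K Λ C M N)}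
    (hP : ∀ (h : H) x m n, h • tpPair L K Λ C M N (ckmk k H K M C x m) n ∈ P)
    (q : TPInd k H L K Λ C M N) : q ∈ P := by
  induction q using Submodule.Quotient.induction_on with
  | H z =>
    induction z with
    | zero => exact P.zero_mem
    | add y z hy hz => exact P.add_mem hy hz
    | tmul h z =>
      refine mem_of_forall_ckmnk_mem (P := P.comap ((tpRel k H L K Λ C M N).mkQ.restrictScalars k ∘ₗ
        TensorProduct.mk k H _ h)) (fun w n => ?_) z
      rw [Submodule.mem_comap]
      change Submodule.Quotient.mk (h ⊗ₜ ckmnk k H L K C M N w n) ∈ P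
      rw [← smul_tpPair]
      exact mem_of_forall_ckmk_mem
        (P := P.comap (Algebra.lsmul k k _ h ∘ₗ (tpPair L K Λ C M N).flip n))
        (fun x m => hP h x m n) w

lemma tpPair_mul_right (x : CKsub k H K C) (a : K) (m : M) (n : N)
    (hxa : (x : H) * a ∈ CKsub k H K C) :
    tpPair L K Λ C M N (ckmk k H K M C ⟨x * a, hxa⟩ m) n =
      tpPair L K Λ C M N (ckmk k H K M C x (a • m)) n :=
  (Submodule.Quotient.eq _).2 (Submodule.subset_span (Or.inl ⟨x, a, m, n, hxa, rfl⟩))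

lemma smul_tpPair_of_mem {b : H} (hbL : b ∈ L) (hb : b ∈ conjK k H K Λ C) (x : CKsub k H K C)
    (m : M) (n : N) {r : ℕ} {b₁ b₂ : Fin r → H} (hb₁ : ∀ j, b₁ j * (x : H) ∈ CKsub k H K C)
    (hb₂ : ∀ j, b₂ j ∈ L) (h : Δ b = ∑ j, b₁ j ⊗ₜ[k] b₂ j) :
    b • tpPair L K Λ C M N (ckmk k H K M C x m) n =
      ∑ j, tpPair L K Λ C M N (ckmk k H K M C ⟨b₁ j * x, hb₁ j⟩ m) ((⟨b₂ j, hb₂ j⟩ : L) • n) := by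
  rw [smul_tpPair, (Submodule.Quotient.eq (tpRel k H L K Λ C M N)).2 (Submodule.subset_span
    (Or.inr ⟨b, hbL, hb, x, m, n, r, b₁, b₂, hb₁, hb₂, h, rfl⟩)), ← Submodule.mkQ_apply, map_sum]
  rfl

variable (L Λ) in
/-- The map `y ⊗ z ↦ 1 ⊗ ((yx ⊗ m) ⊗ zn)` on `H ⊗ H`, where `p` is a projection onto `CK` by which
`yx ∈ CK` is recovered from its value in `H`. -/
def tpOrbit (p : H →ₗ[k] CKsub k H K C) (act : H →ₗ[k] Module.End k N) (x : CKsub k H K C) (m : M)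
    (n : N) : H ⊗[k] H →ₗ[k] TPInd k H L K Λ C M N :=
  TensorProduct.lift (tpPair L K Λ C M N) ∘ₗ
    map ((TensorProduct.mk k (CKsub k H K C) M).flip m ∘ₗ p ∘ₗ LinearMap.mulRight k (x : H))
      (act.flip n)

variable {p : H →ₗ[k] CKsub k H K C} {act : H →ₗ[k] Module.End k N}

lemma tpOrbit_tmul (hp : ∀ x : CKsub k H K C, p x = x) {x : CKsub k H K C} {y : H}
    (hyx : y * x ∈ CKsub k H K C) (m : M) (n : N) (z : H) :
    tpOrbit L Λ p act x m n (y ⊗ₜ z) =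
      tpPair L K Λ C M N (ckmk k H K M C ⟨y * x, hyx⟩ m) (act z n) :=
  congrArg (fun w => tpPair L K Λ C M N (ckmk k H K M C w m) (act z n)) (hp ⟨y * x, hyx⟩)

lemma tpOrbit_comul_mul (hL : IsHopfSubalgebra k H L)
    (hconj : conjK k H K Λ C * CKsub k H K C ≤ CKsub k H K C) (hact : ExtendsAction L act)
    (hp : ∀ x : CKsub k H K C, p x = x) {b l : H} (hbL : b ∈ L) (hb : b ∈ conjK k H K Λ C)
    (hl : l ∈ L) (x : CKsub k H K C) (m : M) (n : N) :
    tpOrbit L Λ p act x m n (Δ b * (1 ⊗ₜ l)) =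
      b • tpPair L K Λ C M N (ckmk k H K M C x m) (act l n) := by
  obtain ⟨r, c, d, hc, hd, hcd⟩ := exists_fin_sum_tmul_of_mem
    (IsSubcoalgebra.inf hL.1 (isSubcoalgebra_conjK K Λ C) b ⟨hbL, hb⟩)
  have mul_mem_CKsub (j : Fin r) : c j * (x : H) ∈ CKsub k H K C :=
    hconj (Submodule.mul_mem_mul (hc j).2 x.2)
  rw [smul_tpPair_of_mem hbL hb x m _ mul_mem_CKsub (fun j => (hd j).1) hcd, hcd,
    Finset.sum_mul, map_sum]
  refine Finset.sum_congr rfl fun j _ => ?_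
  rw [Algebra.TensorProduct.tmul_mul_tmul, mul_one, tpOrbit_tmul hp (mul_mem_CKsub j),
    hact.map_mul (hd j).1 hl, Module.End.mul_apply, hact.apply_of_mem (hd j).1]

lemma twist_tpPair_of_mem (hL : IsHopfSubalgebra k H L)
    (hconj : conjK k H K Λ C * CKsub k H K C ≤ CKsub k H K C) (hact : ExtendsAction L act) {a : H}
    (haL : a ∈ L) (ha : a ∈ conjK k H K Λ C) (x : CKsub k H K C) (m : M) (n : N)
    (hax : a * (x : H) ∈ CKsub k H K C) :
    twist act (tpPair L K Λ C M N) a (ckmk k H K M C x m) n =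
      tpPair L K Λ C M N (ckmk k H K M C ⟨a * x, hax⟩ m) n := by
  obtain ⟨p, hp⟩ := (CKsub k H K C).subtype.exists_leftInverse_of_injective
    (CKsub k H K C).ker_subtype
  replace hp (x : CKsub k H K C) : p x = x := LinearMap.congr_fun hp x
  obtain ⟨r, c, d, hc, hd, hcd⟩ := exists_fin_sum_tmul_of_mem
    (IsSubcoalgebra.inf hL.1 (isSubcoalgebra_conjK K Λ C) a ⟨haL, ha⟩)
  calc _ = ∑ j, tpOrbit L Λ p act x m n (Δ (c j) * (1 ⊗ₜ 𝖲 (d j))) := by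
        rw [twist_apply act _ hcd]
        exact Finset.sum_congr rfl fun j _ => (tpOrbit_comul_mul hL hconj hact hp (hc j).1 (hc j).2
          (hL.2 _ (hd j).1) x m n).symm
    _ = tpOrbit L Λ p act x m n (a ⊗ₜ 1) := by rw [← map_sum, sum_comul_mul_tmul_antipode hcd]
    _ = _ := by rw [tpOrbit_tmul hp hax, hact.map_one, Module.End.one_apply]

lemma exists_comp_pairing (hL : IsHopfSubalgebra k H L)
    (hconj : conjK k H K Λ C * CKsub k H K C ≤ CKsub k H K C) (hact : ExtendsAction L act) :
    ∃ θ : Comp k H L K Λ C M →ₗ[k] N →ₗ[k] TPInd k H L K Λ C M N, ∀ (l : L) w n,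
      θ (Submodule.Quotient.mk (lcmk k H L K C M l w)) n =
        twist act (tpPair L K Λ C M N) l w n := by
  let F : LCM k H L K C M →ₗ[k] N →ₗ[k] TPInd k H L K Λ C M N :=
    TensorProduct.lift (twist act (tpPair L K Λ C M N) ∘ₗ L.val.toLinearMap)
  have F_lcmk (l : L) (w : CKM k H K M C) :
      F (lcmk k H L K C M l w) = twist act (tpPair L K Λ C M N) l w := rfl
  suffices compRel_le : compRel k H L K Λ C M ≤ LinearMap.ker F from
    ⟨(compRel k H L K Λ C M).liftQ F compRel_le, fun _ _ _ => rfl⟩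
  refine Submodule.span_le.2 ?_
  rintro _ (⟨l, a, haL, ha, x, m, hax, rfl⟩ | ⟨l, x, a, m, hxa, rfl⟩) <;>
    rw [SetLike.mem_coe, LinearMap.mem_ker, map_sub, F_lcmk, F_lcmk, sub_eq_zero] <;>
    ext n <;>
    obtain ⟨r, c, d, -, hd, hcd⟩ := exists_fin_sum_tmul_of_mem (hL.1 l l.2)
  · simp only [twist_mul hL hact _ hd hcd haL, twist_apply _ _ hcd,
      twist_tpPair_of_mem hL hconj hact haL ha _ _ _ hax]
  · simp only [twist_apply _ _ hcd, tpPair_mul_right]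

variable (L K Λ C M N) in
lemma exists_tpInd_map :
    ∃ Ψ : TPInd k H L K Λ C M N →ₗ[k] Ind k H K M ⊗[k] Ind k H L N,
      (∀ x m n, Ψ (tpPair L K Λ C M N (ckmk k H K M C x m) n) =
        Submodule.Quotient.mk ((x : H) ⊗ₜ m) ⊗ₜ Submodule.Quotient.mk (1 ⊗ₜ n)) ∧
      ∀ h q, Ψ (h • q) = diagHom k H (Ind k H K M) (Ind k H L N) h (Ψ q) := by
  let f : CKM k H K M C →ₗ[k] Ind k H K M :=
    (indRel k H K M).mkQ.restrictScalars k ∘ₗ map (CKsub k H K C).subtype LinearMap.id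
  let g : N →ₗ[k] Ind k H L N := (indRel k H L N).mkQ.restrictScalars k ∘ₗ TensorProduct.mk k H N 1
  let β : CKMN k H L K C M N →ₗ[k] Ind k H K M ⊗[k] Ind k H L N := map f g
  have β_ckmnk (x : CKsub k H K C) (m : M) (n : N) :
      β (ckmnk k H L K C M N (ckmk k H K M C x m) n) =
        Submodule.Quotient.mk ((x : H) ⊗ₜ m) ⊗ₜ Submodule.Quotient.mk (1 ⊗ₜ n) := rfl
  obtain ⟨Ψ, Ψ_mk, Ψ_smul⟩ := exists_lift_of_forall_freeLift_eq_zero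
    (diagHom k H (Ind k H K M) (Ind k H L N)) β (R := tpRel k H L K Λ C M N) rfl (by
      rintro _ (⟨x, a, m, n, hxa, rfl⟩ | ⟨b, -, -, x, m, n, r, b₁, b₂, hb₁, hb₂, h, rfl⟩)
      · rw [map_sub, freeLift_tmul, freeLift_tmul, β_ckmnk, β_ckmnk, sub_eq_zero]
        have := congrArg ((x : H) • ·) (mk_tmul_eq_mk_one_tmul a m)
        simp only [smul_mk_tmul, mul_one] at this
        rw [this]
      · rw [map_sub, map_sum, sub_eq_zero]
        simp only [freeLift_tmul, β_ckmnk, map_one, diagHom_tmul h, Module.End.one_apply,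
          smul_mk_tmul, mul_one, ← mk_tmul_eq_mk_one_tmul])
  exact ⟨Ψ, fun x m n => (Ψ_mk _).trans (β_ckmnk x m n), Ψ_smul⟩

end Components

section DirectSum

variable {k H ι : Type*} [CommSemiring k] [Semiring H] [Algebra k H] [DecidableEq ι]
  {Z : ι → Type*} [∀ i, AddCommMonoid (Z i)] [∀ i, Module k (Z i)]

lemma mem_of_forall_of_mem {P : Submodule k (⨁ i, Z i)} (hP : ∀ i z, DirectSum.of Z i z ∈ P)
    (z : ⨁ i, Z i) : z ∈ P := by
  induction z using DirectSum.induction_on with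
  | zero => exact P.zero_mem
  | of i z => exact hP i z
  | add y z hy hz => exact P.add_mem hy hz

lemma toModule_smul [∀ i, Module H (Z i)] {V : Type*} [AddCommMonoid V] [Module k V]
    (ρ : H →ₐ[k] Module.End k V) (Ψ : ∀ i, Z i →ₗ[k] V)
    (hΨ : ∀ i h z, Ψ i (h • z) = ρ h (Ψ i z)) (h : H) (z : ⨁ i, Z i) :
    DirectSum.toModule k ι V Ψ (h • z) = ρ h (DirectSum.toModule k ι V Ψ z) := by
  induction z using DirectSum.induction_on with
  | zero => simp
  | of i z =>
    rw [← DirectSum.of_smul, ← DirectSum.lof_eq_of k, ← DirectSum.lof_eq_of k,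
      DirectSum.toModule_lof, DirectSum.toModule_lof, hΨ]
  | add y z hy hz => rw [smul_add, map_add, map_add, map_add, hy, hz]

end DirectSum

/-! ### The Mackey decomposition of a tensor product -/

section MackeyTensor

variable {k : Type} [Field k] {H : Type} [Ring H] [HopfAlgebra k H]

local notation "Δ" => Coalgebra.comul (R := k) (A := H)
local notation "𝖲" => HopfAlgebra.antipode k (A := H)

universe v

variable {L K : Subalgebra k H} {Λ : H}
  {M : Type v} [AddCommGroup M] [Module k M] [Module K M]
  {ι : Type} [DecidableEq ι] {rep : ι → Submodule k H}

/-- The left-multiplication map `π_M : ⨁ L ⊗_{L ∩ ᶜK} ᶜM → M↑^H` is an isomorphism. This is the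
conclusion of `MackeyAt` for a given system of representatives and a given map. -/
def IsMackeyDecomposition (π : (⨁ i, Comp k H L K Λ (rep i) M) →ₗ[k] Ind k H K M) : Prop :=
  Function.Bijective π ∧
    ∀ i (l : L) (x : CKsub k H K (rep i)) (m : M),
      π (DirectSum.of (fun i => Comp k H L K Λ (rep i) M) i
        (Submodule.Quotient.mk (lcmk k H L K (rep i) M l (ckmk k H K M (rep i) x m)))) =
      Submodule.Quotient.mk (((l : H) * (x : H)) ⊗ₜ[k] m)

lemma IsMackeyDecomposition.mem_of_forall_mk_mul_tmul_mem
    {π : (⨁ i, Comp k H L K Λ (rep i) M) →ₗ[k] Ind k H K M} (hπ : IsMackeyDecomposition π)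
    {P : Submodule k (Ind k H K M)}
    (hP : ∀ i (l : L) (x : CKsub k H K (rep i)) (m : M),
      Submodule.Quotient.mk (((l : H) * (x : H)) ⊗ₜ[k] m) ∈ P) (u : Ind k H K M) : u ∈ P := by
  obtain ⟨z, rfl⟩ := hπ.1.2 u
  refine mem_of_forall_of_mem (P := P.comap π) (fun i z => ?_) z
  refine mem_of_forall_mk_lcmk_mem (P := (P.comap π).comap
    (DirectSum.lof k ι (fun i => Comp k H L K Λ (rep i) M) i)) (fun l x m => ?_) z
  rw [Submodule.mem_comap, Submodule.mem_comap, DirectSum.lof_eq_of, hπ.2]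
  exact hP i l x m

variable [IsScalarTower k K M]
  {N : Type v} [AddCommGroup N] [Module k N] [Module L N] [IsScalarTower k L N]

/-- A pairing `θ : M↑^H × N → ⨁ (ᶜM ⊗ N)↑^H` with
`θ(l(x ⊗ m), n) = ∑ l₁ ((x ⊗ m) ⊗ S(l₂)n)` for `l ∈ L` and `x ∈ CK`. -/
def IsMackeyPairing (act : H →ₗ[k] Module.End k N)
    (θ : Ind k H K M →ₗ[k] N →ₗ[k] ⨁ i, TPInd k H L K Λ (rep i) M N) : Prop :=
  ∀ i (l : L) (x : CKsub k H K (rep i)) (m : M) (n : N),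
    θ (Submodule.Quotient.mk (((l : H) * (x : H)) ⊗ₜ[k] m)) n =
      DirectSum.of (fun i => TPInd k H L K Λ (rep i) M N) i
        (twist act (tpPair L K Λ (rep i) M N) l (ckmk k H K M (rep i) x m) n)

variable {act : H →ₗ[k] Module.End k N}

lemma IsMackeyDecomposition.exists_isMackeyPairing (hL : IsHopfSubalgebra k H L)
    (hconj : ∀ i, conjK k H K Λ (rep i) * CKsub k H K (rep i) ≤ CKsub k H K (rep i))
    (hact : ExtendsAction L act)
    {π : (⨁ i, Comp k H L K Λ (rep i) M) →ₗ[k] Ind k H K M} (hπ : IsMackeyDecomposition π) :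
    ∃ θ : Ind k H K M →ₗ[k] N →ₗ[k] ⨁ i, TPInd k H L K Λ (rep i) M N, IsMackeyPairing act θ := by
  choose θ hθ using fun i => exists_comp_pairing (M := M) hL (hconj i) hact
  let e := LinearEquiv.ofBijective π hπ.1
  refine ⟨DirectSum.toModule k ι _ (fun i => (θ i).compr₂ (DirectSum.lof k ι
    (fun i => TPInd k H L K Λ (rep i) M N) i)) ∘ₗ e.symm.toLinearMap, fun i l x m n => ?_⟩
  have symm_mk : e.symm (Submodule.Quotient.mk (((l : H) * (x : H)) ⊗ₜ[k] m)) =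
      DirectSum.lof k ι (fun i => Comp k H L K Λ (rep i) M) i
        (Submodule.Quotient.mk (lcmk k H L K (rep i) M l (ckmk k H K M (rep i) x m))) :=
    e.symm_apply_eq.2 (hπ.2 i l x m).symm
  rw [LinearMap.comp_apply, LinearEquiv.coe_coe, symm_mk, DirectSum.toModule_lof, ← hθ]
  rfl

lemma IsMackeyPairing.isEquivariantPairing (hL : IsHopfSubalgebra k H L)
    (hact : ExtendsAction L act)
    {π : (⨁ i, Comp k H L K Λ (rep i) M) →ₗ[k] Ind k H K M} (hπ : IsMackeyDecomposition π)
    {θ : Ind k H K M →ₗ[k] N →ₗ[k] ⨁ i, TPInd k H L K Λ (rep i) M N}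
    (hθ : IsMackeyPairing act θ) : IsEquivariantPairing L act θ := by
  intro l hl u n
  obtain ⟨r, c, d, hc, hd, hcd⟩ := exists_fin_sum_tmul_of_mem (hL.1 l hl)
  suffices u ∈ LinearMap.eqLocus (∑ j, θ.flip (act (d j) n) ∘ₗ Algebra.lsmul k k _ (c j))
      (Algebra.lsmul k k _ l ∘ₗ θ.flip n) by
    simpa [hcd, LinearMap.sum_apply] using this
  refine hπ.mem_of_forall_mk_mul_tmul_mem (fun i g x m => ?_) u
  have θ_smul (j : Fin r) := hθ i ⟨c j * g, mul_mem (hc j) g.2⟩ x m (act (d j) n)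
  simp only [mul_assoc] at θ_smul
  simp only [LinearMap.mem_eqLocus, LinearMap.sum_apply, LinearMap.comp_apply,
    LinearMap.flip_apply, Algebra.lsmul_coe, smul_mk_tmul, θ_smul, hθ i g x m n]
  rw [← map_sum, sum_twist_mul hL hact _ hc hd hcd g.2]
  exact map_smul (DirectSum.lof H ι (fun i => TPInd k H L K Λ (rep i) M N) i) l _

variable (L K Λ M N rep) in
lemma exists_directSum_tpInd_map :
    ∃ Ψ : (⨁ i, TPInd k H L K Λ (rep i) M N) →ₗ[k] Ind k H K M ⊗[k] Ind k H L N,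
      (∀ i x m n, Ψ (DirectSum.of (fun i => TPInd k H L K Λ (rep i) M N) i
          (tpPair L K Λ (rep i) M N (ckmk k H K M (rep i) x m) n)) =
        Submodule.Quotient.mk ((x : H) ⊗ₜ m) ⊗ₜ Submodule.Quotient.mk (1 ⊗ₜ n)) ∧
      ∀ h z, Ψ (h • z) = diagHom k H (Ind k H K M) (Ind k H L N) h (Ψ z) := by
  choose Ψ Ψ_tpPair Ψ_smul using fun i => exists_tpInd_map L K Λ (rep i) M N
  refine ⟨DirectSum.toModule k ι _ Ψ, fun i x m n => ?_, toModule_smul _ Ψ Ψ_smul⟩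
  rw [← DirectSum.lof_eq_of k, DirectSum.toModule_lof, Ψ_tpPair]

lemma IsMackeyPairing.leftInverse (hact : ExtendsAction L act)
    {θ : Ind k H K M →ₗ[k] N →ₗ[k] ⨁ i, TPInd k H L K Λ (rep i) M N} (hθ : IsMackeyPairing act θ)
    {Φ : Ind k H K M ⊗[k] Ind k H L N →ₗ[k] ⨁ i, TPInd k H L K Λ (rep i) M N}
    (Φ_mk : ∀ u n, Φ (u ⊗ₜ Submodule.Quotient.mk (1 ⊗ₜ n)) = θ u n)
    (Φ_smul : ∀ h z, Φ (diagHom k H (Ind k H K M) (Ind k H L N) h z) = h • Φ z)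
    {Ψ : (⨁ i, TPInd k H L K Λ (rep i) M N) →ₗ[k] Ind k H K M ⊗[k] Ind k H L N}
    (Ψ_tpPair : ∀ i x m n, Ψ (DirectSum.of (fun i => TPInd k H L K Λ (rep i) M N) i
        (tpPair L K Λ (rep i) M N (ckmk k H K M (rep i) x m) n)) =
      Submodule.Quotient.mk ((x : H) ⊗ₜ m) ⊗ₜ Submodule.Quotient.mk (1 ⊗ₜ n))
    (Ψ_smul : ∀ h z, Ψ (h • z) = diagHom k H (Ind k H K M) (Ind k H L N) h (Ψ z)) :
    Function.LeftInverse Φ Ψ := by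
  refine mem_of_forall_of_mem (P := LinearMap.eqLocus (Φ ∘ₗ Ψ) LinearMap.id) fun i => ?_
  refine mem_of_forall_smul_tpPair_mem (P := (LinearMap.eqLocus (Φ ∘ₗ Ψ) LinearMap.id).comap
    (DirectSum.lof k ι (fun i => TPInd k H L K Λ (rep i) M N) i)) fun h x m n => ?_
  have of_smul (q : TPInd k H L K Λ (rep i) M N) :
      DirectSum.of (fun i => TPInd k H L K Λ (rep i) M N) i (h • q) =
        h • DirectSum.of (fun i => TPInd k H L K Λ (rep i) M N) i q :=
    map_smul (DirectSum.lof H ι (fun i => TPInd k H L K Λ (rep i) M N) i) h q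
  have θ_mk := hθ i 1 x m n
  rw [OneMemClass.coe_one, one_mul, twist_one hact] at θ_mk
  rw [Submodule.mem_comap, LinearMap.mem_eqLocus, DirectSum.lof_eq_of, LinearMap.comp_apply,
    of_smul, Ψ_smul, Ψ_tpPair, Φ_smul, Φ_mk, θ_mk, LinearMap.id_apply]

lemma IsMackeyDecomposition.surjective (hL : IsHopfSubalgebra k H L) (hS : Function.Bijective 𝖲)
    {π : (⨁ i, Comp k H L K Λ (rep i) M) →ₗ[k] Ind k H K M} (hπ : IsMackeyDecomposition π)
    {Ψ : (⨁ i, TPInd k H L K Λ (rep i) M N) →ₗ[k] Ind k H K M ⊗[k] Ind k H L N}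
    (Ψ_tpPair : ∀ i x m n, Ψ (DirectSum.of (fun i => TPInd k H L K Λ (rep i) M N) i
        (tpPair L K Λ (rep i) M N (ckmk k H K M (rep i) x m) n)) =
      Submodule.Quotient.mk ((x : H) ⊗ₜ m) ⊗ₜ Submodule.Quotient.mk (1 ⊗ₜ n))
    (Ψ_smul : ∀ h z, Ψ (h • z) = diagHom k H (Ind k H K M) (Ind k H L N) h (Ψ z)) :
    Function.Surjective Ψ := by
  have diagHom_mem : ∀ h, ∀ z ∈ LinearMap.range Ψ,
      diagHom k H (Ind k H K M) (Ind k H L N) h z ∈ LinearMap.range Ψ := by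
    rintro h _ ⟨y, rfl⟩
    exact ⟨h • y, Ψ_smul h y⟩
  refine mem_of_forall_tmul_mk_one_tmul_mem (P := LinearMap.range Ψ) hS diagHom_mem fun u n => ?_
  refine hπ.mem_of_forall_mk_mul_tmul_mem (P := (LinearMap.range Ψ).comap
    ((TensorProduct.mk k (Ind k H K M) (Ind k H L N)).flip (Submodule.Quotient.mk (1 ⊗ₜ n))))
    (fun i l x m => ?_) u
  obtain ⟨r, c, d, -, hd, hcd⟩ := exists_fin_sum_tmul_of_mem (hL.1 l l.2)
  rw [Submodule.mem_comap, LinearMap.flip_apply, TensorProduct.mk_apply, ← smul_mk_tmul,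
    smul_tmul_eq_sum_diagHom hcd]
  refine Submodule.sum_mem _ fun j _ => diagHom_mem _ _ ?_
  have smul_mk_one : 𝖲 (d j) • (Submodule.Quotient.mk (1 ⊗ₜ n) : Ind k H L N) =
      Submodule.Quotient.mk (1 ⊗ₜ ((⟨𝖲 (d j), hL.2 _ (hd j)⟩ : L) • n)) := by
    rw [smul_mk_tmul, mul_one, ← mk_tmul_eq_mk_one_tmul]
  exact ⟨_, (Ψ_tpPair i x m _).trans (by rw [smul_mk_one])⟩

variable (N) in
lemma IsMackeyDecomposition.exists_bijective (hL : IsHopfSubalgebra k H L)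
    (hconj : ∀ i, conjK k H K Λ (rep i) * CKsub k H K (rep i) ≤ CKsub k H K (rep i))
    (hS : Function.Bijective 𝖲)
    {π : (⨁ i, Comp k H L K Λ (rep i) M) →ₗ[k] Ind k H K M} (hπ : IsMackeyDecomposition π) :
    ∃ Ψ : (⨁ i, TPInd k H L K Λ (rep i) M N) →ₗ[k] Ind k H K M ⊗[k] Ind k H L N,
      Function.Bijective Ψ ∧
      ∀ h z, Ψ (h • z) = diagHom k H (Ind k H K M) (Ind k H L N) h (Ψ z) := by
  obtain ⟨act, hact⟩ := exists_extendsAction (L := L) (N := N)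
  obtain ⟨θ, hθ⟩ := hπ.exists_isMackeyPairing (N := N) hL hconj hact
  obtain ⟨Φ, Φ_mk, Φ_smul⟩ :=
    exists_lift_tensor_ind hL hS hact (hθ.isEquivariantPairing hL hact hπ)
  obtain ⟨Ψ, Ψ_tpPair, Ψ_smul⟩ := exists_directSum_tpInd_map L K Λ M rep N
  exact ⟨Ψ, ⟨(hθ.leftInverse hact Φ_mk Φ_smul Ψ_tpPair Ψ_smul).injective,
    hπ.surjective hL hS Ψ_tpPair Ψ_smul⟩, Ψ_smul⟩

end MackeyTensor

end

end MackeyPaper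

namespace MackeyPaper

noncomputable section

universe v

variable (k : Type) [Field k] [CharZero k] [IsAlgClosed k]
variable (H : Type) [Ring H] [HopfAlgebra k H]

section Statements

variable [FiniteDimensional k H] [IsSemisimpleRing H]

variable {k H} in
theorem statement_2_general {L K : Subalgebra k H}
    (hL : IsHopfSubalgebra k H L) (hK : IsHopfSubalgebra k H K)
    {Λ : H} (hΛ : IsIdempotentIntegral k H K Λ)
    {M : Type v} [AddCommGroup M] [Module k M] [Module K M] [IsScalarTower k K M]
    {N : Type v} [AddCommGroup N] [Module k N] [Module L N] [IsScalarTower k L N]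
    {ι : Type} [DecidableEq ι] {rep : ι → Submodule k H}
    (hrep : ∀ i, IsSubcoalgebra k H (rep i))
    {π : (⨁ i, Comp k H L K Λ (rep i) M) →ₗ[k] Ind k H K M} (hπ : IsMackeyDecomposition π) :
    ∃ φ : (Ind k H K M ⊗[k] Ind k H L N) ≃ₗ[k] ⨁ i, TPInd k H L K Λ (rep i) M N,
      ∀ (h : H) (u : Ind k H K M) (w : Ind k H L N) (r : ℕ) (h₁ h₂ : Fin r → H),
        Coalgebra.comul (R := k) h = ∑ j, h₁ j ⊗ₜ[k] h₂ j →
        φ (∑ j, (h₁ j • u) ⊗ₜ[k] (h₂ j • w)) = h • φ (u ⊗ₜ[k] w) := by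
  obtain ⟨κ, hκ⟩ := exists_integral (k := k) (H := H)
  obtain ⟨f, hf⟩ := exists_hitL_integral_eq_one isHopfSubalgebra_top hκ
  have hS := antipode_bijective hκ hf
  have hconj i : conjK k H K Λ (rep i) * CKsub k H K (rep i) ≤ CKsub k H K (rep i) :=
    Submodule.mul_le.2 fun _ ha _ hx => conjK_mul_mem hK hΛ (hrep i) ha hx
  obtain ⟨Ψ, hΨ, Ψ_smul⟩ := hπ.exists_bijective N hL hconj hS
  exact exists_linearEquiv_of_bijective (H := H) hΨ Ψ_smul

/-- Theorem 7: suppose `(L, K)` is a Mackey pair of Hopf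
subalgebras of the semisimple Hopf algebra `H`.  Then for any
finite-dimensional `K`-module `M` and `L`-module `N` there is a canonical
isomorphism of `H`-modules
`M↑_K^H ⊗ N↑_L^H ≅ ⊕_{C ∈ L\H/K} ((ᶜM)↓_{L∩ᶜK} ⊗ N↓_{L∩ᶜK})↑_{L∩ᶜK}^H`;
the diagonal `H`-module structure on the left-hand side is expressed on
generators via expansions `Δ(h) = ∑ h₁ ⊗ h₂`. -/
theorem statement_2 (L K : Subalgebra k H)
    (hL : IsHopfSubalgebra k H L) (hK : IsHopfSubalgebra k H K)
    (Λ : H) (hΛ : IsIdempotentIntegral k H K Λ)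
    (hMackey : IsMackeyPair.{v} k H L K Λ)
    (M : Type v) [AddCommGroup M] [Module k M] [Module ↥K M]
    [IsScalarTower k ↥K M] [Module.Finite k M]
    (N : Type v) [AddCommGroup N] [Module k N] [Module ↥L N]
    [IsScalarTower k ↥L N] [Module.Finite k N]
    (ι : Type) [DecidableEq ι] (rep : ι → Submodule k H)
    (hrep : IsDoubleCosetReps k H L K rep) :
    ∃ φ : ((Ind k H K M) ⊗[k] (Ind k H L N)) ≃ₗ[k]
        (⨁ i : ι, TPInd k H L K Λ (rep i) M N),
      ∀ (h : H) (u : Ind k H K M) (w : Ind k H L N) (r : ℕ) (h₁ h₂ : Fin r → H),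
        Coalgebra.comul (R := k) h = ∑ j, h₁ j ⊗ₜ[k] h₂ j →
        φ (∑ j, (h₁ j • u) ⊗ₜ[k] (h₂ j • w)) = h • φ (u ⊗ₜ[k] w) := by
  obtain ⟨π, hπ⟩ := hMackey M ι rep hrep
  exact statement_2_general hL hK hΛ (fun i => (hrep.1 i).1) hπ

end Statements

end

end MackeyPaper
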